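/- arXiv:2311.01947 — 3 statements merged into one kernel-verified Lean document; each statement's English description precedes it below -/
import Mathlib

section
/- Let p be a prime, e ≥ 1, q = p^e, and let a, b be natural numbers with a ≥ 1 and b ≤ e−1, and let n be a non-negative integer. Then the following are equivalent: (i) there exist a length m and a p^{ae−b}-divisible linear code over F_q of effective length n; (ii) the leading coefficient c_a of the S_q(a,b)-adic expansion of n is non-negative, i.e., whenever n = Σ_{i=0}^{a} c_i·s_q(a,b,i) with c_0 ∈ {0,…,p^{e−b}−1}, c_i ∈ {0,…,q−1} for 1 ≤ i ≤ a−1, and c_a ∈ ℤ, then c_a ≥ 0. -/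
open Module Finset

noncomputable section
open scoped Classical

variable (F : Type) [Field F] [Fintype F]

instance finiteSubmodule (v : ℕ) : Finite (Submodule F (Fin v → F)) :=
  Finite.of_injective (fun s => (s : Set (Fin v → F))) SetLike.coe_injective

/-- The points of `PG(v-1,q)`: one-dimensional subspaces of `F_q^v`. -/
abbrev PGPoint (v : ℕ) := {W : Submodule F (Fin v → F) // finrank F W = 1}

instance (v : ℕ) : Fintype (PGPoint F v) := Fintype.ofFinite _

/-- Cardinality of a multiset of points. -/
def mCard {v : ℕ} (M : PGPoint F v → ℕ) : ℕ := ∑ P, M P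

/-- Multiplicity of a subspace: the sum of multiplicities over points contained in it. -/
def mVal {v : ℕ} (M : PGPoint F v → ℕ) (S : Submodule F (Fin v → F)) : ℕ :=
  ∑ P : PGPoint F v, if P.1 ≤ S then M P else 0

/-- A multiset of points is `Δ`-divisible if `#M ≡ M(H) (mod Δ)` for every hyperplane `H`. -/
def IsDivisibleMultiset {v : ℕ} (Δ : ℕ) (M : PGPoint F v → ℕ) : Prop :=
  ∀ H : Submodule F (Fin v → F), finrank F H = v - 1 → mCard F M ≡ mVal F M H [MOD Δ]

/-- A set of points is `Δ`-divisible if `|S| ≡ |S ∩ H| (mod Δ)` for every hyperplane `H`. -/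
def IsDivisibleSet {v : ℕ} (Δ : ℕ) (S : Set (PGPoint F v)) : Prop :=
  ∀ H : Submodule F (Fin v → F), finrank F H = v - 1 →
    S.ncard ≡ (S ∩ {P | P.1 ≤ H}).ncard [MOD Δ]

/-- A linear code `C ≤ F_q^m` is `Δ`-divisible if all Hamming weights are divisible by `Δ`. -/
def IsDivisibleCode {m : ℕ} (Δ : ℕ) (C : Submodule F (Fin m → F)) : Prop :=
  ∀ c ∈ C, Δ ∣ hammingNorm c

/-- The effective length: the number of coordinates where some codeword is nonzero. -/
def effLength {m : ℕ} (C : Submodule F (Fin m → F)) : ℕ :=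
  Nat.card {i : Fin m // ∃ c ∈ C, c i ≠ 0}

/-- `s_q(a,b,i)`, with `q = p^e`, written without division:
`s_q(a,b,0) = 1 + q + ⋯ + q^a` and `s_q(a,b,i) = p^{ie-b}·(1 + q + ⋯ + q^{a-i})` for `i ≥ 1`. -/
def sQ (p e a b i : ℕ) : ℕ :=
  if i = 0 then ∑ j ∈ Finset.range (a + 1), (p ^ e) ^ j
  else p ^ (i * e - b) * ∑ j ∈ Finset.range (a - i + 1), (p ^ e) ^ j

/-!
Simplex codes have effective lengths `1 + q + ⋯ + q ^ j` and divisibility `q ^ j`. Repeating their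
coordinates realizes every place value `s_q(a,b,i)`, and juxtaposing codes adds effective lengths,
so an expansion with nonnegative leading coefficient is realized place by place.

Conversely, averaging over all codewords gives a codeword vanishing on at most a `1 / q` fraction of
the `n` coordinates. Restricting the code to these zeros divides the divisibility by `q`, because
the weights on the line `y + K x` determine that of the restriction of `y`. The expansion of the
restricted length has a leading coefficient which is nonnegative by induction on `a`. This bounds
the weight of the codeword by the digit sum of `n`; if the leading coefficient of `n` were
negative, this bound would contradict the choice of the codeword.
-/

/-- The value of the `S_q(k+1,b)`-adic expansion with lowest digit `c₀`, middle digits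
`d 0, …, d (k-1)` and leading coefficient `t`, where `u` stands for `p^(e-b)`. -/
def adicValue {R : Type*} [CommSemiring R] (q u : R) {k : ℕ} (c₀ : R) (d : Fin k → R) (t : R) : R :=
  c₀ * ∑ j ∈ range (k + 2), q ^ j
    + ∑ i, d i * (q ^ (i : ℕ) * u * ∑ j ∈ range (k - i + 1), q ^ j) + t * (q ^ k * u)

lemma adicValue_zero_sub {R : Type*} [CommRing R] {q u w : R} (huw : u * w = q) (c₀ : R)
    (d : Fin 0 → R) (t τ : R) :
    adicValue q u c₀ d t - τ * u = c₀ + u * (c₀ * w + t - τ) := by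
  simp only [adicValue, zero_add, geom_sum_two, univ_eq_empty, sum_empty, pow_zero]
  linear_combination c₀ * huw.symm

/-- Lengthening each place by one term `q ^ (k + 1)` adds the same multiple of `q ^ (k + 1) * u`
for every unit of every digit, and these multiples all move into the leading coefficient. -/
lemma adicValue_succ_sub {R : Type*} [CommRing R] {q u w : R} (huw : u * w = q) {k : ℕ} (c₀ : R)
    (d : Fin (k + 1) → R) (t τ : R) :
    adicValue q u c₀ d t - τ * (q ^ (k + 1) * u) =
      adicValue q u c₀ (Fin.init d)
        (d (Fin.last k) + q * (c₀ * w + ∑ i, d i + t - τ)) := by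
  have place_succ (i : Fin k) :
      q ^ (i : ℕ) * u * ∑ j ∈ range (k + 1 - i + 1), q ^ j =
        q ^ (i : ℕ) * u * ∑ j ∈ range (k - i + 1), q ^ j + q ^ (k + 1) * u := by
    have hpow : q ^ (k + 1) = q ^ (i : ℕ) * q ^ (k - i + 1) := by
      rw [← pow_add]; congr 1; omega
    rw [show k + 1 - (i : ℕ) + 1 = k - i + 1 + 1 by omega, geom_sum_succ' (n := k - i + 1), hpow]
    ring
  simp only [adicValue, Fin.sum_univ_castSucc, Fin.val_castSucc, Fin.val_last, place_succ,
    Fin.init_def, mul_add (d _), sum_add_distrib, ← sum_mul, Nat.add_sub_cancel_left,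
    one_add_one_eq_two, geom_sum_two, geom_sum_succ' (n := k + 2)]
  linear_combination -c₀ * q ^ (k + 1) * huw

lemma sub_one_mul_adicValue {R : Type*} [CommRing R] {q u w : R} (huw : u * w = q) {k : ℕ}
    (c₀ : R) (d : Fin k → R) (t : R) :
    (q - 1) * adicValue q u c₀ d t =
      q * (q ^ k * u) * (c₀ * w + ∑ i, d i + t)
        - (c₀ + ∑ i, d i * (q ^ (i : ℕ) * u) + t * (q ^ k * u)) := by
  have middle : (q - 1) * ∑ i, d i * (q ^ (i : ℕ) * u * ∑ j ∈ range (k - i + 1), q ^ j) =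
      q * (q ^ k * u) * ∑ i, d i - ∑ i, d i * (q ^ (i : ℕ) * u) := by
    rw [mul_sum, mul_sum, ← sum_sub_distrib]
    refine sum_congr rfl fun i _ ↦ ?_
    have hpow : q ^ (i : ℕ) * q ^ (k - i + 1) = q * q ^ k := by
      rw [← pow_add, ← pow_succ']; congr 1; omega
    linear_combination d i * (q ^ (i : ℕ) * u) * mul_geom_sum q (k - i + 1) + d i * u * hpow
  rw [adicValue]
  linear_combination middle + c₀ * mul_geom_sum q (k + 2) - c₀ * q ^ (k + 1) * huw

lemma add_sum_digits_mul_pow_lt {q u c₀ : ℤ} (hq : 0 ≤ q) (hu : 0 ≤ u) (hc₀ : c₀ < u) {k : ℕ}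
    {d : Fin k → ℤ} (hd : ∀ i, d i < q) :
    c₀ + ∑ i, d i * (q ^ (i : ℕ) * u) < q ^ k * u := by
  induction k with
  | zero => simpa using hc₀
  | succ k ih =>
    rw [Fin.sum_univ_castSucc]
    have lower : c₀ + ∑ i : Fin k, d i.castSucc * (q ^ (i : ℕ) * u) < q ^ k * u :=
      ih fun i ↦ hd i.castSucc
    have top : (d (Fin.last k) + 1) * (q ^ k * u) ≤ q * (q ^ k * u) := by
      gcongr
      exact hd _
    simp only [Fin.val_castSucc, Fin.val_last, pow_succ']
    linarith

lemma exists_digits {q : ℤ} (hq : 0 < q) {k : ℕ} (v : Fin k → ℤ) (hv : ∀ i, v i ≡ 1 [ZMOD q])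
    (n : ℤ) :
    ∃ (d : Fin k → ℤ) (t : ℤ), (∀ i, d i ∈ Set.Ico 0 q) ∧
      n = ∑ i, d i * (q ^ (i : ℕ) * v i) + t * q ^ k := by
  induction k generalizing n with
  | zero => exact ⟨Fin.elim0, n, fun i ↦ i.elim0, by simp⟩
  | succ k ih =>
    obtain ⟨m, hm⟩ : q ∣ n - n % q * v 0 :=
      Int.ModEq.dvd (by simpa using (Int.mod_modEq n q).mul (hv 0))
    obtain ⟨d, t, hd, hmd⟩ := ih (Fin.tail v) (fun i ↦ hv i.succ) m
    refine ⟨Fin.cons (n % q) d, t,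
      Fin.cases ⟨Int.emod_nonneg n hq.ne', Int.emod_lt_of_pos n hq⟩ hd, ?_⟩
    have shift : ∑ i : Fin k, d i * (q ^ (i + 1 : ℕ) * v i.succ)
        = q * ∑ i : Fin k, d i * (q ^ (i : ℕ) * v i.succ) := by
      rw [mul_sum]
      exact sum_congr rfl fun i _ ↦ by ring
    simp only [Fin.sum_univ_succ, Fin.cons_zero, Fin.cons_succ, Fin.val_zero, Fin.val_succ, shift]
    simp only [Fin.tail] at hmd
    linear_combination hm + q * hmd

lemma exists_eq_adicValue {q u w : ℤ} (hq : 0 < q) (hu : 0 < u) (huw : u * w = q) (k : ℕ) (n : ℤ) :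
    ∃ (c₀ : ℤ) (d : Fin k → ℤ) (t : ℤ), c₀ ∈ Set.Ico 0 u ∧ (∀ i, d i ∈ Set.Ico 0 q) ∧
      n = adicValue q u c₀ d t := by
  have geom_modEq_one (i : Fin k) : ∑ j ∈ range (k - i + 1), q ^ j ≡ 1 [ZMOD q] := by
    rw [geom_sum_succ]
    simp [Int.modEq_iff_dvd]
  obtain ⟨d, t, hd, hdt⟩ := exists_digits hq _ geom_modEq_one
    (n / u - n % u * w * ∑ j ∈ range (k + 1), q ^ j)
  refine ⟨n % u, d, t, ⟨Int.emod_nonneg n hu.ne', Int.emod_lt_of_pos n hu⟩, hd, ?_⟩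
  have factor_u : ∑ i, d i * (q ^ (i : ℕ) * u * ∑ j ∈ range (k - i + 1), q ^ j)
      = u * ∑ i, d i * (q ^ (i : ℕ) * ∑ j ∈ range (k - i + 1), q ^ j) := by
    rw [mul_sum]
    exact sum_congr rfl fun i _ ↦ by ring
  rw [adicValue, factor_u, geom_sum_succ (n := k + 1)]
  linear_combination u * hdt - Int.emod_add_mul_ediv n u
    + n % u * (∑ j ∈ range (k + 1), q ^ j) * huw

/-- Since `adicValue q u c₀ d t` times `q - 1` is close to `q` times the digit sum times
`q ^ k * u`, a negative `t` would make a large weight `τ * (q ^ k * u)` exceed the digit sum. -/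
lemma leading_nonneg_of_le {q u w : ℤ} (hq : 0 < q) (hu : 0 < u) (huw : u * w = q) {k : ℕ}
    {c₀ : ℤ} {d : Fin k → ℤ} {t τ : ℤ} (hc₀ : c₀ < u) (hd : ∀ i, d i < q)
    (hmean : q * (adicValue q u c₀ d t - τ * (q ^ k * u)) ≤ adicValue q u c₀ d t)
    (hτ : τ ≤ c₀ * w + ∑ i, d i + t) : 0 ≤ t := by
  have hΔ : 0 < q ^ k * u := by positivity
  have hvalue := sub_one_mul_adicValue huw c₀ d t
  have hdigits := add_sum_digits_mul_pow_lt hq.le hu.le hc₀ hd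
  have hle : q * (q ^ k * u) * τ ≤ q * (q ^ k * u) * (c₀ * w + ∑ i, d i + t) := by gcongr
  have : 0 < (t + 1) * (q ^ k * u) := by linarith
  exact Int.lt_add_one_iff.mp (pos_of_mul_pos_left this hΔ.le)

section HammingNorm

variable {α ι ι' : Type*} [Zero α] [Fintype ι] [Fintype ι']

lemma hammingNorm_eq_sum (x : ι → α) : hammingNorm x = ∑ i, if x i = 0 then 0 else 1 := by
  simp [hammingNorm, card_filter]

lemma hammingNorm_add_card_zeros (x : ι → α) :
    hammingNorm x + Fintype.card {i // x i = 0} = Fintype.card ι := by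
  rw [Fintype.card_subtype, add_comm]
  exact card_filter_add_card_filter_not _

lemma hammingNorm_restrict (y : ι → α) (s : ι → Prop) [Fintype {i // s i}] :
    hammingNorm (fun i : {i // s i} ↦ y i) = ∑ i, if s i then if y i = 0 then 0 else 1 else 0 := by
  rw [hammingNorm_eq_sum, ← sum_filter]
  exact (sum_subtype (p := s) _ (by simp) fun i ↦ if y i = 0 then 0 else 1).symm

lemma hammingNorm_restrict_of_forall_ne_zero {y : ι → α} {s : ι → Prop} [Fintype {i // s i}]
    (hs : ∀ i, y i ≠ 0 → s i) : hammingNorm (fun i : {i // s i} ↦ y i) = hammingNorm y := by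
  rw [hammingNorm_restrict, hammingNorm_eq_sum]
  refine sum_congr rfl fun i _ ↦ ?_
  by_cases hi : y i = 0 <;> simp [hi, hs]

lemma hammingNorm_comp_equiv (x : ι → α) (ε : ι' ≃ ι) :
    hammingNorm (x ∘ ε) = hammingNorm x := by
  simp only [hammingNorm_eq_sum]
  exact Equiv.sum_comp ε fun i ↦ if x i = 0 then 0 else 1

lemma hammingNorm_sumElim (x : ι → α) (y : ι' → α) :
    hammingNorm (Sum.elim x y) = hammingNorm x + hammingNorm y := by
  simp only [hammingNorm_eq_sum]
  exact Fintype.sum_sum_type _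

lemma hammingNorm_copies (x : ι → α) (r : ℕ) :
    hammingNorm (fun i : Fin r × ι ↦ x i.2) = r * hammingNorm x := by
  have hcopy : hammingNorm (fun i : Fin r × ι ↦ x i.2) = ∑ _j : Fin r, hammingNorm x := by
    simp only [hammingNorm_eq_sum]
    exact Fintype.sum_prod_type _
  simpa using hcopy

end HammingNorm

section Line

variable {K ι : Type*} [Field K] [Fintype K] [Fintype ι]

lemma card_add_mul_ne_zero_add_one (y : K) {x : K} (hx : x ≠ 0) :
    #{l : K | y + l * x ≠ 0} + 1 = Fintype.card K := by
  have : ({l : K | y + l * x ≠ 0} : Finset K) = univ.erase (-y / x) := by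
    ext l
    simp [eq_div_iff hx, eq_neg_iff_add_eq_zero, add_comm]
  rw [this, card_erase_add_one (mem_univ _), card_univ]

/-- Off the zeros of `x` each line `y + K x` has exactly one zero per coordinate. -/
lemma sum_hammingNorm_add_smul (x y : ι → K) :
    ∑ l : K, hammingNorm (y + l • x) + hammingNorm x =
      Fintype.card K * (hammingNorm x + hammingNorm fun i : {i // x i = 0} ↦ y i) := by
  simp only [hammingNorm_eq_sum x, hammingNorm_eq_sum (y + _), hammingNorm_restrict]
  rw [sum_comm, ← sum_add_distrib, ← sum_add_distrib, mul_sum]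
  refine sum_congr rfl fun i _ ↦ ?_
  by_cases hx : x i = 0
  · simp [hx]
  · simpa [hx, card_filter] using card_add_mul_ne_zero_add_one (y i) hx

end Line

section Family

variable {K V ι : Type*} [Field K] [AddCommGroup V] [Module K V] [Fintype ι]

lemma card_mul_card_ker {f : Dual K V} (hf : f ≠ 0) :
    Nat.card K * Nat.card (LinearMap.ker f) = Nat.card V := by
  rw [(LinearMap.ker f).card_eq_card_quotient_mul_card, mul_comm,
    Nat.card_congr (f.quotKerEquivOfSurjective (LinearMap.surjective_of_ne_zero hf)).toEquiv]

lemma exists_card_mul_card_zeros_le [Fintype K] [Finite V] {φ : ι → Dual K V} (hφ : ∀ i, φ i ≠ 0) :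
    ∃ x, Fintype.card K * Fintype.card {i // φ i x = 0} ≤ Fintype.card ι := by
  have := Fintype.ofFinite V
  have card_zeros (i : ι) : Fintype.card K * #{x | φ i x = 0} = Fintype.card V := by
    simpa only [Nat.card_eq_fintype_card, LinearMap.mem_ker, Fintype.card_subtype] using
      card_mul_card_ker (hφ i)
  have double_count : ∑ x : V, Fintype.card K * Fintype.card {i // φ i x = 0} ≤
      ∑ _x : V, Fintype.card ι := by
    have hswap : ∑ x : V, #{i | φ i x = 0} = ∑ i, #{x | φ i x = 0} :=
      sum_card_bipartiteAbove_eq_sum_card_bipartiteBelow fun x i ↦ φ i x = 0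
    rw [← mul_sum]
    simp only [Fintype.card_subtype, hswap, mul_sum, card_zeros, sum_const, card_univ, smul_eq_mul,
      mul_comm, le_refl]
  obtain ⟨x, -, hx⟩ := exists_le_of_sum_le ⟨0, mem_univ _⟩ double_count
  exact ⟨x, hx⟩

/-- A `Δ`-divisible linear code of full length `#ι`, given by its coordinate functionals (the
columns of a generator matrix): the codewords are the vectors `fun i ↦ φ i v`. In the language of
projective geometry this is a `Δ`-divisible multiset of points. -/
structure IsDivisibleFamily (Δ : ℕ) (φ : ι → Dual K V) : Prop where
  ne_zero : ∀ i, φ i ≠ 0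
  dvd_hammingNorm : ∀ v, Δ ∣ hammingNorm fun i ↦ φ i v

namespace IsDivisibleFamily

lemma restrict_zeros [Fintype K] {Δ : ℕ} {φ : ι → Dual K V}
    (h : IsDivisibleFamily (Fintype.card K * Δ) φ) (x : V) :
    IsDivisibleFamily Δ fun i : {i // φ i x = 0} ↦ φ i where
  ne_zero i := h.ne_zero i
  dvd_hammingNorm y := by
    have hline := sum_hammingNorm_add_smul (fun i ↦ φ i x) (fun i ↦ φ i y)
    have hpoint (l : K) : (fun i ↦ φ i y) + l • (fun i ↦ φ i x) = fun i ↦ φ i (y + l • x) := by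
      ext i
      simp
    simp only [hpoint, mul_add] at hline
    have hsum : Fintype.card K * Δ ∣
        ∑ l : K, hammingNorm (fun i ↦ φ i (y + l • x)) + hammingNorm (fun i ↦ φ i x) :=
      dvd_add (dvd_sum fun l _ ↦ h.dvd_hammingNorm _) (h.dvd_hammingNorm x)
    rw [hline, Nat.dvd_add_right ((h.dvd_hammingNorm x).mul_left _)] at hsum
    exact Nat.dvd_of_mul_dvd_mul_left Fintype.card_pos hsum

lemma exists_mul_card_zeros_le [Fintype K] [Finite V] {Δ : ℕ} {φ : ι → Dual K V}
    (h : IsDivisibleFamily Δ φ) :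
    ∃ (x : V) (τ : ℤ), (Fintype.card {i // φ i x = 0} : ℤ) = Fintype.card ι - τ * Δ ∧
      Fintype.card K * (Fintype.card ι - τ * Δ) ≤ (Fintype.card ι : ℤ) := by
  obtain ⟨x, hx⟩ := exists_card_mul_card_zeros_le h.ne_zero
  obtain ⟨τ, hτ⟩ := h.dvd_hammingNorm x
  have hzeros : (Fintype.card {i // φ i x = 0} : ℤ) = Fintype.card ι - τ * Δ := by
    rw [← hammingNorm_add_card_zeros fun i ↦ φ i x, hτ]
    push_cast
    ring
  exact ⟨x, τ, hzeros, hzeros ▸ mod_cast hx⟩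

/-- `leading_nonneg_of_le` needs `τ` to be at most the weighted digit sum `c₀ * w + ∑ i, d i + t`.
The code restricted to the zeros of `x` supplies this: by induction its leading coefficient, which
contains `q` times the difference, is nonnegative. -/
theorem leading_nonneg [Fintype K] [Finite V] {u w k : ℕ}
    (huw : u * w = Fintype.card K) {φ : ι → Dual K V}
    (h : IsDivisibleFamily (Fintype.card K ^ k * u) φ) {c₀ : ℤ} {d : Fin k → ℤ} {t : ℤ}
    (hc₀ : c₀ < u) (hd : ∀ i, d i < Fintype.card K)
    (hn : (Fintype.card ι : ℤ) = adicValue (Fintype.card K : ℤ) u c₀ d t) : 0 ≤ t := by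
  have hq : (0 : ℤ) < Fintype.card K := mod_cast Fintype.card_pos
  have huw' : (u : ℤ) * w = Fintype.card K := mod_cast huw
  have hu : (0 : ℤ) < u := pos_of_mul_pos_left (huw' ▸ hq) (Nat.cast_nonneg w)
  induction k generalizing ι t with
  | zero =>
    obtain ⟨x, τ, hzeros, hmean⟩ := h.exists_mul_card_zeros_le
    push_cast [hn] at hzeros hmean
    refine leading_nonneg_of_le hq hu huw' hc₀ hd hmean ?_
    rw [pow_zero, one_mul, adicValue_zero_sub huw'] at hzeros
    have : u * (-1) < u * (c₀ * w + t - τ) := by linarith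
    have := lt_of_mul_lt_mul_left this hu.le
    simp only [univ_eq_empty, sum_empty]
    linarith
  | succ k ih =>
    obtain ⟨x, τ, hzeros, hmean⟩ := h.exists_mul_card_zeros_le
    push_cast [hn] at hzeros hmean
    refine leading_nonneg_of_le hq hu huw' hc₀ hd hmean ?_
    rw [adicValue_succ_sub huw'] at hzeros
    rw [pow_succ', mul_assoc] at h
    have hrestrict := ih (h.restrict_zeros x) (fun i ↦ hd i.castSucc) hzeros
    have : (Fintype.card K : ℤ) * (-1) < Fintype.card K * (c₀ * w + ∑ i, d i + t - τ) := by
      linarith [hd (Fin.last k)]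
    linarith [lt_of_mul_lt_mul_left this hq.le]

end IsDivisibleFamily

end Family

section Constructions

variable {K V V' ι ι' : Type*} [Field K] [AddCommGroup V] [Module K V] [AddCommGroup V']
  [Module K V'] [Fintype ι] [Fintype ι']

namespace IsDivisibleFamily

lemma comp_equiv {Δ : ℕ} {φ : ι → Dual K V} (h : IsDivisibleFamily Δ φ) (ε : ι' ≃ ι) :
    IsDivisibleFamily Δ (φ ∘ ε) where
  ne_zero i := h.ne_zero (ε i)
  dvd_hammingNorm v :=
    (hammingNorm_comp_equiv (fun i ↦ φ i v) ε).symm ▸ h.dvd_hammingNorm v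

lemma sum {Δ : ℕ} {φ : ι → Dual K V} {φ' : ι' → Dual K V'} (h : IsDivisibleFamily Δ φ)
    (h' : IsDivisibleFamily Δ φ') :
    IsDivisibleFamily Δ (Sum.elim (fun i ↦ φ i ∘ₗ LinearMap.fst K V V')
      fun i ↦ φ' i ∘ₗ LinearMap.snd K V V') where
  ne_zero
    | .inl i => fun hi ↦ h.ne_zero i <| LinearMap.ext fun v ↦ by simpa using congr($hi (v, 0))
    | .inr i => fun hi ↦ h'.ne_zero i <| LinearMap.ext fun v ↦ by simpa using congr($hi (0, v))
  dvd_hammingNorm v := by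
    have hsum := dvd_add (h.dvd_hammingNorm v.1) (h'.dvd_hammingNorm v.2)
    rw [← hammingNorm_sumElim] at hsum
    refine hsum.trans (dvd_of_eq (congrArg hammingNorm (funext ?_)))
    rintro (i | i) <;> rfl

lemma copies {Δ : ℕ} {φ : ι → Dual K V} (h : IsDivisibleFamily Δ φ) (r : ℕ) :
    IsDivisibleFamily (r * Δ) fun i : Fin r × ι ↦ φ i.2 where
  ne_zero i := h.ne_zero i.2
  dvd_hammingNorm v := by
    rw [hammingNorm_copies fun i ↦ φ i v]
    exact mul_dvd_mul_left r (h.dvd_hammingNorm v)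

end IsDivisibleFamily

open scoped LinearAlgebra.Projectivization

lemma natCard_projectivization_rep_mem {K V : Type*} [DivisionRing K] [AddCommGroup V] [Module K V]
    (H : Submodule K V) :
    Nat.card {P : ℙ K V // P.rep ∈ H} = Nat.card (ℙ K H) := by
  have hrange : Set.range (Projectivization.map H.subtype H.injective_subtype) =
      {P : ℙ K V | P.rep ∈ H} := by
    ext P
    constructor
    · rintro ⟨Q, rfl⟩
      obtain ⟨a, ha⟩ := Projectivization.exists_smul_eq_mk_rep K (H.subtype Q.rep)
        (by simpa using Q.rep_nonzero)
      rw [← Q.mk_rep, Projectivization.map_mk, Set.mem_ofPred_eq, ← ha]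
      exact H.smul_mem a.1 Q.rep.2
    · intro hP
      refine ⟨Projectivization.mk K ⟨P.rep, hP⟩ fun h ↦ P.rep_nonzero (congrArg Subtype.val h), ?_⟩
      rw [Projectivization.map_mk]
      exact P.mk_rep
  rw [← Set.coe_ofPred, ← hrange]
  exact (Nat.card_congr (Equiv.ofInjective _ (Projectivization.map_injective _ _))).symm

lemma card_projectivization_dual [Fintype K] {k : ℕ} (hV : finrank K V = k)
    [Fintype (ℙ K (Dual K V))] :
    Fintype.card (ℙ K (Dual K V)) = ∑ j ∈ range k, Fintype.card K ^ j := by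
  simpa using Projectivization.card_of_finrank K (Dual K V) (Subspace.dual_finrank_eq.trans hV)

/-- The simplex code: every nonzero codeword has weight `#K ^ k`, since a hyperplane of the dual
space has `#K ^ k` points less than the whole space. -/
lemma isDivisibleFamily_simplex [Fintype K] {k : ℕ} (hV : finrank K V = k + 1)
    [Fintype (ℙ K (Dual K V))] :
    IsDivisibleFamily (Fintype.card K ^ k) fun P : ℙ K (Dual K V) ↦ P.rep where
  ne_zero P := P.rep_nonzero
  dvd_hammingNorm v := by
    have : FiniteDimensional K V := .of_finrank_pos (hV ▸ k.succ_pos)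
    obtain rfl | hv := eq_or_ne v 0
    · simp [hammingNorm_eq_sum]
    have heval : Dual.eval K V v ≠ 0 := (eval_apply_eq_zero_iff K v).not.mpr hv
    have hker : finrank K (Dual.eval K V v).ker = k := by
      have := Dual.finrank_ker_add_one_of_ne_zero heval
      rw [Subspace.dual_finrank_eq, hV] at this
      exact Nat.succ_injective this
    have hzeros : Fintype.card {P : ℙ K (Dual K V) // P.rep v = 0} =
        ∑ j ∈ range k, Fintype.card K ^ j := by
      simpa [Projectivization.card_of_finrank K (Dual.eval K V v).ker hker] using
        natCard_projectivization_rep_mem (Dual.eval K V v).ker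
    have htotal := hammingNorm_add_card_zeros fun P : ℙ K (Dual K V) ↦ P.rep v
    rw [hzeros, card_projectivization_dual hV, sum_range_succ] at htotal
    exact dvd_of_eq (by linarith)

end Constructions

section Codes

variable {K : Type} [Field K]

lemma IsDivisibleFamily.exists_isDivisibleCode {V ι : Type*} [AddCommGroup V]
    [Module K V] [Fintype ι] {Δ : ℕ} {φ : ι → Dual K V} (h : IsDivisibleFamily Δ φ) :
    ∃ (m : ℕ) (C : Submodule K (Fin m → K)),
      IsDivisibleCode K Δ C ∧ effLength K C = Fintype.card ι := by
  have hψ := h.comp_equiv (Fintype.equivFin ι).symm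
  set ψ := φ ∘ (Fintype.equivFin ι).symm
  refine ⟨Fintype.card ι, (LinearMap.pi ψ).range, ?_, ?_⟩
  · rintro _ ⟨v, rfl⟩
    exact hψ.dvd_hammingNorm v
  · have hfull (i : Fin (Fintype.card ι)) : ∃ c ∈ (LinearMap.pi ψ).range, c i ≠ 0 := by
      obtain ⟨v, hv⟩ := DFunLike.ne_iff.mp (hψ.ne_zero i)
      exact ⟨_, ⟨v, rfl⟩, hv⟩
    rw [effLength, Nat.card_congr (Equiv.subtypeUnivEquiv hfull), Nat.card_fin]

lemma IsDivisibleCode.isDivisibleFamily {m Δ : ℕ} {C : Submodule K (Fin m → K)}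
    [Fintype {i // ∃ c ∈ C, c i ≠ 0}] (hC : IsDivisibleCode K Δ C) :
    IsDivisibleFamily Δ fun i : {i // ∃ c ∈ C, c i ≠ 0} ↦ LinearMap.proj i.1 ∘ₗ C.subtype where
  ne_zero i hi := by
    obtain ⟨c, hc, hci⟩ := i.2
    exact hci congr($hi ⟨c, hc⟩)
  dvd_hammingNorm c := by
    have hrestrict := hammingNorm_restrict_of_forall_ne_zero (y := c.1)
      (s := fun i ↦ ∃ c ∈ C, c i ≠ 0) fun i hi ↦ ⟨c, c.2, hi⟩
    exact hrestrict.symm ▸ hC c c.2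

variable (K)

/-- The effective lengths of `Δ`-divisible codes over `K`. -/
def divisibleLengths (Δ : ℕ) : AddSubmonoid ℕ where
  carrier := {n | ∃ (m : ℕ) (C : Submodule K (Fin m → K)),
    IsDivisibleCode K Δ C ∧ effLength K C = n}
  zero_mem' := by
    have h : IsDivisibleFamily Δ (Empty.elim : Empty → Dual K K) :=
      ⟨nofun, fun v ↦ by simp [hammingNorm_eq_sum]⟩
    simpa using h.exists_isDivisibleCode
  add_mem' := by
    rintro _ _ ⟨_, _, hC, rfl⟩ ⟨_, _, hD, rfl⟩
    simpa [effLength] using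
      (hC.isDivisibleFamily.sum hD.isDivisibleFamily).exists_isDivisibleCode

variable {K}

lemma IsDivisibleFamily.card_mem_divisibleLengths {V ι : Type*} [AddCommGroup V]
    [Module K V] [Fintype ι] {Δ : ℕ} {φ : ι → Dual K V} (h : IsDivisibleFamily Δ φ) :
    Fintype.card ι ∈ divisibleLengths K Δ :=
  h.exists_isDivisibleCode

lemma divisibleLengths_anti {Δ Δ' : ℕ} (hΔ : Δ ∣ Δ') :
    divisibleLengths K Δ' ≤ divisibleLengths K Δ := by
  rintro _ ⟨m, C, hC, rfl⟩
  exact ⟨m, C, fun c hc ↦ hΔ.trans (hC c hc), rfl⟩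

lemma mul_mem_divisibleLengths {Δ n : ℕ} (hn : n ∈ divisibleLengths K Δ) (r : ℕ) :
    r * n ∈ divisibleLengths K (r * Δ) := by
  obtain ⟨_, _, hC, rfl⟩ := hn
  simpa [effLength] using (hC.isDivisibleFamily.copies r).card_mem_divisibleLengths

variable [Fintype K]

open scoped LinearAlgebra.Projectivization in
lemma geom_sum_mem_divisibleLengths (k : ℕ) :
    ∑ j ∈ range (k + 1), Fintype.card K ^ j ∈ divisibleLengths K (Fintype.card K ^ k) := by
  have : Finite (Dual K (Fin (k + 1) → K)) := Module.finite_of_finite K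
  have := Fintype.ofFinite (ℙ K (Dual K (Fin (k + 1) → K)))
  have hfinrank : finrank K (Fin (k + 1) → K) = k + 1 := finrank_fin_fun K
  rw [← card_projectivization_dual hfinrank]
  exact (isDivisibleFamily_simplex hfinrank).card_mem_divisibleLengths

theorem adicValue_mem_divisibleLengths {u w k : ℕ} (huw : u * w = Fintype.card K) (c₀ : ℕ)
    (d : Fin k → ℕ) (t : ℕ) :
    adicValue (Fintype.card K) u c₀ d t ∈ divisibleLengths K (Fintype.card K ^ k * u) := by
  refine add_mem (add_mem ?_ (sum_mem fun i _ ↦ ?_)) ?_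
  · have hΔ : Fintype.card K ^ k * u ∣ Fintype.card K ^ (k + 1) :=
      ⟨w, by rw [mul_assoc, huw, pow_succ]⟩
    exact nsmul_mem (divisibleLengths_anti hΔ (geom_sum_mem_divisibleLengths (k + 1))) c₀
  · have hplace := mul_mem_divisibleLengths (geom_sum_mem_divisibleLengths (K := K) (k - i))
      (Fintype.card K ^ (i : ℕ) * u)
    rw [mul_right_comm, ← pow_add, Nat.add_sub_cancel' i.2.le] at hplace
    exact nsmul_mem hplace (d i)
  · have hplace := mul_mem_divisibleLengths (geom_sum_mem_divisibleLengths (K := K) 0)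
      (Fintype.card K ^ k * u)
    simp only [zero_add, range_one, sum_singleton, pow_zero, mul_one] at hplace
    exact nsmul_mem hplace t

theorem mem_divisibleLengths_iff {u w k n : ℕ} (huw : u * w = Fintype.card K) :
    n ∈ divisibleLengths K (Fintype.card K ^ k * u) ↔
      ∀ (c₀ : ℤ) (d : Fin k → ℤ) (t : ℤ), c₀ ∈ Set.Ico 0 (u : ℤ) →
        (∀ i, d i ∈ Set.Ico 0 (Fintype.card K : ℤ)) →
        (n : ℤ) = adicValue (Fintype.card K : ℤ) u c₀ d t → 0 ≤ t := by
  constructor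
  · rintro ⟨m, C, hC, rfl⟩ c₀ d t hc₀ hd hn
    refine hC.isDivisibleFamily.leading_nonneg huw hc₀.2 (fun i ↦ (hd i).2) ?_
    rw [← hn, effLength, Nat.card_eq_fintype_card]
  · intro hleading
    have hq : 0 < Fintype.card K := Fintype.card_pos
    have hu : 0 < u := Nat.pos_of_mul_pos_right (huw ▸ hq)
    obtain ⟨c₀, d, t, hc₀, hd, hn⟩ := exists_eq_adicValue (q := Fintype.card K) (u := u) (w := w)
      (mod_cast hq) (mod_cast hu) (mod_cast huw) k n
    have ht := hleading c₀ d t hc₀ hd hn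
    lift c₀ to ℕ using hc₀.1
    lift d to Fin k → ℕ using fun i ↦ (hd i).1
    lift t to ℕ using ht
    have : n = adicValue (Fintype.card K) u c₀ d t := by
      simp only [adicValue] at hn ⊢
      exact_mod_cast hn
    exact this ▸ adicValue_mem_divisibleLengths huw c₀ d t

end Codes

lemma sum_mul_sQ {p e b k : ℕ} (hb : b ≤ e) (c : Fin (k + 2) → ℤ) :
    ∑ i, c i * (sQ p e (k + 1) b i : ℤ) =
      adicValue ((p : ℤ) ^ e) ((p : ℤ) ^ (e - b)) (c 0) (fun i : Fin k ↦ c i.castSucc.succ)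
        (c (Fin.last (k + 1))) := by
  have hexp (i : ℕ) : (i + 1) * e - b = e * i + (e - b) := by
    rw [add_one_mul, mul_comm i, Nat.add_sub_assoc hb]
  rw [Fin.sum_univ_succ, Fin.sum_univ_castSucc]
  simp [sQ, adicValue, hexp, pow_add, pow_mul, add_assoc]

theorem stmt_0_general (F : Type) [Field F] [Fintype F] (p e a b : ℕ) (ha : 1 ≤ a) (hb : b ≤ e)
    (hF : Fintype.card F = p ^ e) (n : ℕ) :
    (∃ (m : ℕ) (C : Submodule F (Fin m → F)),
        IsDivisibleCode F (p ^ (a * e - b)) C ∧ effLength F C = n) ↔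
      (∀ c : Fin (a + 1) → ℤ,
        (0 ≤ c 0 ∧ c 0 < (p : ℤ) ^ (e - b)) →
        (∀ i : Fin (a + 1), 1 ≤ (i : ℕ) → (i : ℕ) ≤ a - 1 → 0 ≤ c i ∧ c i < (p : ℤ) ^ e) →
        (n : ℤ) = ∑ i : Fin (a + 1), c i * (sQ p e a b i : ℤ) →
        0 ≤ c (Fin.last a)) := by
  obtain ⟨k, rfl⟩ := Nat.exists_eq_add_of_le' ha
  have huw : p ^ (e - b) * p ^ b = Fintype.card F := by rw [hF, pow_sub_mul_pow p hb]
  have hΔ : p ^ ((k + 1) * e - b) = Fintype.card F ^ k * p ^ (e - b) := by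
    rw [hF, ← pow_mul, ← pow_add, add_one_mul, mul_comm k, Nat.add_sub_assoc hb]
  rw [hΔ]
  refine (mem_divisibleLengths_iff huw).trans
    ⟨fun h c hc₀ hc hn ↦ ?_, fun h c₀ d t hc₀ hd hn ↦ ?_⟩
  · rw [sum_mul_sQ hb] at hn
    refine h (c 0) (fun i ↦ c i.castSucc.succ) _ (mod_cast hc₀) (fun i ↦ ?_)
      (by simpa [hF] using hn)
    simpa [hF] using hc i.castSucc.succ (by simp) (by simp)
  · have hdigits (i : Fin (k + 2)) (hi : 1 ≤ (i : ℕ)) (hik : (i : ℕ) ≤ k) :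
        (Fin.cons c₀ (Fin.snoc d t) : Fin (k + 2) → ℤ) i ∈ Set.Ico 0 ((p : ℤ) ^ e) := by
      obtain ⟨j, rfl⟩ : ∃ j : Fin k, i = j.castSucc.succ :=
        ⟨⟨i - 1, by omega⟩, Fin.ext (by simp; omega)⟩
      simpa [hF, Fin.cons_succ] using hd j
    have hleading := h (Fin.cons c₀ (Fin.snoc d t)) (mod_cast hc₀) hdigits
      (by simpa [sum_mul_sQ hb, hF, ← Fin.succ_last] using hn)
    simpa [← Fin.succ_last] using hleading

/-- Main theorem. For `q = p^e`, `a ≥ 1`, `b ≤ e-1` and `n ∈ ℕ`, a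
`p^{ae-b}`-divisible linear code over `F_q` of effective length `n` exists iff the leading
coefficient of the `S_q(a,b)`-adic expansion of `n` is non-negative. -/
theorem stmt_0 (p e a b : ℕ) (hp : p.Prime) (he : 1 ≤ e) (ha : 1 ≤ a) (hb : b ≤ e - 1)
    (hF : Fintype.card F = p ^ e) (n : ℕ) :
    (∃ (m : ℕ) (C : Submodule F (Fin m → F)),
        IsDivisibleCode F (p ^ (a * e - b)) C ∧ effLength F C = n) ↔
      (∀ c : Fin (a + 1) → ℤ,
        (0 ≤ c 0 ∧ c 0 < (p : ℤ) ^ (e - b)) →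
        (∀ i : Fin (a + 1), 1 ≤ (i : ℕ) → (i : ℕ) ≤ a - 1 → 0 ≤ c i ∧ c i < (p : ℤ) ^ e) →
        (n : ℤ) = ∑ i : Fin (a + 1), c i * (sQ p e a b i : ℤ) →
        0 ≤ c (Fin.last a)) :=
  stmt_0_general F p e a b ha (hb.trans (Nat.sub_le e 1)) hF n

end
end

section
/- Let q be a prime power, Δ ≥ 1 a power of the characteristic of F_q, and let M be a Δ-divisible multiset of points in PG(1,q), i.e., on the projective line over F_q. Then there exist a function w from the points of PG(1,q) to ℕ and a non-negative integer s such that M(P) = Δ·w(P) + s for every point P of PG(1,q), and moreover Δ divides q·s. -/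
/-!
On the projective line the hyperplanes are the points, so `Δ`-divisibility says that every
multiplicity is congruent to `#M` modulo `Δ`. With `s` the common remainder, summing over the
`q + 1` points gives `s ≡ #M ≡ (q + 1) * s`, that is, `Δ ∣ q * s`.
-/

open Module Finset

noncomputable section
open scoped Classical

variable (F : Type) [Field F] [Fintype F]

theorem sum_modEq_iff_dvd_mul {ι : Type*} {t : Finset ι} {f : ι → ℕ} {m n a : ℕ}
    (hcard : #t = n + 1) (hf : ∀ i ∈ t, f i ≡ a [MOD m]) :
    ∑ i ∈ t, f i ≡ a [MOD m] ↔ m ∣ n * a := by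
  have hsum : ∑ i ∈ t, f i ≡ n * a + a [MOD m] := by
    simpa only [sum_const, hcard, smul_eq_mul, add_one_mul] using Nat.ModEq.sum hf
  rw [← Nat.add_modEq_right_iff]
  exact ⟨hsum.symm.trans, hsum.trans⟩

theorem card_pgPoint (v : ℕ) :
    Fintype.card (PGPoint F v) = ∑ i ∈ range v, Fintype.card F ^ i := by
  simp only [Fintype.card_eq_nat_card]
  rw [← Nat.card_congr (Projectivization.equivSubmodule F (Fin v → F)),
    Projectivization.card_of_finrank F (Fin v → F) (finrank_fin_fun F)]

section

variable {F}

theorem mVal_point {v : ℕ} (M : PGPoint F v → ℕ) (P : PGPoint F v) : mVal F M P.1 = M P := by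
  have le_iff_eq (Q : PGPoint F v) : Q.1 ≤ P.1 ↔ Q = P :=
    ⟨fun h => Subtype.ext (Submodule.eq_of_le_of_finrank_eq h (Q.2.trans P.2.symm)),
      fun h => h ▸ le_rfl⟩
  simp only [mVal, le_iff_eq, sum_ite_eq', mem_univ, if_true]

theorem IsDivisibleMultiset.mCard_modEq_apply {Δ : ℕ} {M : PGPoint F 2 → ℕ}
    (hM : IsDivisibleMultiset F Δ M) (P : PGPoint F 2) : mCard F M ≡ M P [MOD Δ] :=
  mVal_point M P ▸ hM P.1 P.2

end

theorem stmt_6_general (Δ : ℕ) (M : PGPoint F 2 → ℕ) (hM : IsDivisibleMultiset F Δ M) :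
    ∃ (w : PGPoint F 2 → ℕ) (s : ℕ),
      (∀ P : PGPoint F 2, M P = Δ * w P + s) ∧ Δ ∣ Fintype.card F * s := by
  have card_points : #(univ : Finset (PGPoint F 2)) = Fintype.card F + 1 := by
    rw [card_univ, card_pgPoint, geom_sum_two]
  have mCard_modEq_rem : mCard F M ≡ mCard F M % Δ [MOD Δ] := (Nat.mod_modEq _ _).symm
  refine ⟨fun P => M P / Δ, mCard F M % Δ, fun P => ?_, ?_⟩
  · rw [hM.mCard_modEq_apply P, Nat.div_add_mod]
  · exact (sum_modEq_iff_dvd_mul card_points fun P _ =>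
      (hM.mCard_modEq_apply P).symm.trans mCard_modEq_rem).mp mCard_modEq_rem

/-- Let `q = p^e` and `Δ = p^r ≥ 1` be a power of the characteristic `p` of
`F_q`. Every `Δ`-divisible multiset of points on the projective line `PG(1,q)` is of the form
`M(P) = Δ·w(P) + s` for all points `P`, where `w` is a multiset of points and `s ∈ ℕ`;
moreover `Δ` divides `q·s`. -/
theorem stmt_6 (p e r : ℕ) (hp : p.Prime) (he : 1 ≤ e)
    (hF : Fintype.card F = p ^ e) (M : PGPoint F 2 → ℕ)
    (hdiv : IsDivisibleMultiset F (p ^ r) M) :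
    ∃ (w : PGPoint F 2 → ℕ) (s : ℕ),
      (∀ P : PGPoint F 2, M P = p ^ r * w P + s) ∧ p ^ r ∣ p ^ e * s :=
  hF ▸ stmt_6_general F (p ^ r) M hdiv

end
end

section
/- Let n ≥ 1 be an integer. There exist a dimension v and a nonempty 2-divisible set of points S in PG(v−1,8) with |S| = n if and only if n ∈ {9, 10} or n ≥ 12. -/
open Module Finset

noncomputable section
open scoped Classical

variable (F : Type) [Field F] [Fintype F]

/-!
If `S` is `2`-divisible, then every hyperplane meets `S` in `z ≡ |S|` points modulo `2`: at least
two if `|S|` is even and the hyperplane contains a given point of `S`, and at least one if `|S|` is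
odd. Averaging over these hyperplanes gives `|S| > q`. If `|S| = 11` and `q = 8`, then every line
contains at most three points of `S`, which bounds the third moment of `z`, and this contradicts
`(z - 1) * (z - 3) * (z - 5) ≥ 0`, summed over all functionals.

Conversely, replacing a point of `S` by the other `q` points of a line through it and a point
outside the ambient space increases `|S|` by `q - 1 = 7`. Plane constructions give the sizes `9` (a
line), `10` (a hyperoval), `12` and `13` (the graph of a surjective additive map `χ : K → 𝔽₂` with
one fibre of `χ` on the line at infinity and, for `13`, one more point there), `14` (two parabolas
without their common points) and `15` (a parabola and part of the line at infinity). This leaves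
`18 = 9 + 9`, and all larger sizes are of the form `n + 7`.
-/

section Families

variable {K V W ι κ : Type*} [Field K] [AddCommGroup V] [Module K V] [AddCommGroup W] [Module K W]

theorem finrank_span_pair {w₁ w₂ : V} (hw : LinearIndependent K ![w₁, w₂]) :
    finrank K (Submodule.span K {w₁, w₂}) = 2 := by
  rw [← Matrix.range_cons_cons_empty w₁ w₂ ![], finrank_span_eq_card hw, Fintype.card_fin]

variable (K) in
/-- A family of vectors representing pairwise distinct points of the projective space of `V`. -/
structure IsPointFamily (x : ι → V) : Prop where
  ne_zero : ∀ i, x i ≠ 0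
  span_injective : Function.Injective fun i => Submodule.span K {x i}

namespace IsPointFamily

variable {x : ι → V}

theorem smul_ne (hx : IsPointFamily K x) {i j : ι} (hij : i ≠ j) (c : K) : c • x i ≠ x j := by
  intro h
  have hc : c ≠ 0 := by
    rintro rfl
    exact hx.ne_zero j (by rw [← h, zero_smul])
  exact hij (hx.span_injective
    (Submodule.span_singleton_eq_span_singleton.mpr ⟨Units.mk0 c hc, h⟩))

theorem of_smul_ne (h0 : ∀ i, x i ≠ 0) (h : ∀ i j, i ≠ j → ∀ c : K, c • x i ≠ x j) :
    IsPointFamily K x where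
  ne_zero := h0
  span_injective i j hij := by
    by_contra hne
    obtain ⟨c, hc⟩ := Submodule.span_singleton_eq_span_singleton.mp hij
    exact h i j hne c hc

theorem of_subsingleton [Subsingleton ι] (h0 : ∀ i, x i ≠ 0) : IsPointFamily K x where
  ne_zero := h0
  span_injective := Function.injective_of_subsingleton _

theorem linearIndependent_pair (hx : IsPointFamily K x) {i j : ι} (hij : i ≠ j) :
    LinearIndependent K ![x i, x j] :=
  (LinearIndependent.pair_iff' (hx.ne_zero i)).mpr (hx.smul_ne hij)

theorem comp (hx : IsPointFamily K x) {e : κ → ι} (he : Function.Injective e) :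
    IsPointFamily K (x ∘ e) where
  ne_zero k := hx.ne_zero (e k)
  span_injective := hx.span_injective.comp he

theorem map (hx : IsPointFamily K x) {g : V →ₗ[K] W} (hg : Function.Injective g) :
    IsPointFamily K (g ∘ x) :=
  of_smul_ne (fun i => (map_ne_zero_iff g hg).mpr (hx.ne_zero i)) fun i j hij c h =>
    hx.smul_ne hij c (hg (by simpa only [Function.comp_apply, map_smul] using h))

theorem of_apply_eq_one (hx : Function.Injective x) (g : Dual K V) (hg : ∀ i, g (x i) = 1) :
    IsPointFamily K x := by
  refine of_smul_ne (fun i h => one_ne_zero ((hg i).symm.trans (by rw [h, map_zero]))) ?_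
  intro i j hij c h
  have hc : c = 1 := by simpa [hg] using congrArg g h
  exact hij (hx (by rw [← h, hc, one_smul]))

theorem sumElim {y : κ → V} (hx : IsPointFamily K x) (hy : IsPointFamily K y) (g : V →ₗ[K] W)
    (hgx : ∀ i, g (x i) ≠ 0) (hgy : ∀ k, g (y k) = 0) : IsPointFamily K (Sum.elim x y) := by
  refine of_smul_ne (Sum.rec hx.ne_zero hy.ne_zero) ?_
  rintro (i | k) (j | l) hne c h
  · exact hx.smul_ne (fun e => hne (congrArg _ e)) c h
  · have hc : c = 0 := by simpa [hgx, hgy] using congrArg g h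
    exact hy.ne_zero l (by rw [← Sum.elim_inr x y, ← h, hc, zero_smul])
  · exact hgx j (by simpa [hgy] using (congrArg g h).symm)
  · exact hy.smul_ne (fun e => hne (congrArg _ e)) c h

end IsPointFamily

variable [Fintype ι] [Fintype κ]

variable (K) in
/-- The condition for the points represented by `x` to form a `Δ`-divisible multiset: the
hyperplanes are the kernels of functionals `f ≠ 0`, and `#{i | f (x i) ≠ 0}` points lie off `ker f`.
-/
def IsDivisibleFamily_s17 (Δ : ℕ) (x : ι → V) : Prop :=
  ∀ f : Dual K V, Δ ∣ #{i | f (x i) ≠ 0}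

theorem IsDivisibleFamily_s17.map {Δ : ℕ} {x : ι → V} (hx : IsDivisibleFamily_s17 K Δ x) (g : V →ₗ[K] W) :
    IsDivisibleFamily_s17 K Δ (g ∘ x) :=
  fun f => hx (f ∘ₗ g)

theorem IsDivisibleFamily_s17.comp_equiv {Δ : ℕ} {x : ι → V} (hx : IsDivisibleFamily_s17 K Δ x)
    (e : κ ≃ ι) : IsDivisibleFamily_s17 K Δ (x ∘ e) := by
  intro f
  rw [card_equiv (t := {i | f (x i) ≠ 0}) e (by simp)]
  exact hx f

theorem IsDivisibleFamily_s17.sumElim {Δ : ℕ} {x : ι → V} {y : κ → V} (hx : IsDivisibleFamily_s17 K Δ x)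
    (hy : IsDivisibleFamily_s17 K Δ y) : IsDivisibleFamily_s17 K Δ (Sum.elim x y) := by
  intro f
  have hcard : #{i | f (Sum.elim x y i) ≠ 0} = #{i | f (x i) ≠ 0} + #{k | f (y k) ≠ 0} := by
    rw [card_filter, card_filter, card_filter, Fintype.sum_sum_type]
    rfl
  rw [hcard]
  exact dvd_add (hx f) (hy f)

variable (K) in
/-- There is a `Δ`-divisible set of `n` points in some projective space over `K`. -/
def HasDivisibleFamily (Δ n : ℕ) : Prop :=
  ∃ (v : ℕ) (x : Fin n → Fin v → K), IsPointFamily K x ∧ IsDivisibleFamily_s17 K Δ x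

theorem HasDivisibleFamily.of_family [FiniteDimensional K V] {Δ n : ℕ} {x : ι → V}
    (hx : IsPointFamily K x) (hdiv : IsDivisibleFamily_s17 K Δ x) (hn : Fintype.card ι = n) :
    HasDivisibleFamily K Δ n := by
  let e : Fin n ≃ ι := (Fintype.equivFinOfCardEq hn).symm
  let g : V ≃ₗ[K] (Fin (finrank K V) → K) := (finBasis K V).equivFun
  exact ⟨finrank K V, g ∘ x ∘ e, (hx.comp e.injective).map (g := g.toLinearMap) g.injective,
    (hdiv.comp_equiv e).map g.toLinearMap⟩

theorem HasDivisibleFamily.add {Δ m n : ℕ} (hm : HasDivisibleFamily K Δ m)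
    (hn : HasDivisibleFamily K Δ n) : HasDivisibleFamily K Δ (m + n) := by
  obtain ⟨v, x, hx, hxdiv⟩ := hm
  obtain ⟨w, y, hy, hydiv⟩ := hn
  let l := LinearMap.inl K (Fin v → K) (Fin w → K)
  let r := LinearMap.inr K (Fin v → K) (Fin w → K)
  refine .of_family (x := Sum.elim (l ∘ x) (r ∘ y)) ?_ ((hxdiv.map l).sumElim (hydiv.map r))
    (by simp)
  exact (hx.map LinearMap.inl_injective).sumElim (hy.map LinearMap.inr_injective)
    (LinearMap.fst K _ _) hx.ne_zero fun _ => rfl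

end Families

section PointSets

variable {K : Type} [Field K]

theorem exists_ker_eq_iff_finrank {V : Type*} [AddCommGroup V] [Module K V]
    [FiniteDimensional K V] {H : Submodule K V} (hV : finrank K V ≠ 0) :
    (∃ f : Dual K V, f ≠ 0 ∧ LinearMap.ker f = H) ↔ finrank K H = finrank K V - 1 := by
  constructor
  · rintro ⟨f, hf, rfl⟩
    have := Dual.finrank_ker_add_one_of_ne_zero hf
    omega
  · intro hH
    have hlt : H < ⊤ := by
      refine lt_top_iff_ne_top.mpr fun h => ?_
      rw [h, finrank_top] at hH
      omega
    obtain ⟨f, hf, hle⟩ := Submodule.exists_le_ker_of_lt_top H hlt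
    have := Dual.finrank_ker_add_one_of_ne_zero hf
    exact ⟨f, hf, (Submodule.eq_of_le_of_finrank_eq hle (by omega)).symm⟩

variable {ι : Type*} {v Δ : ℕ} {p : ι → PGPoint K v} {x : ι → Fin v → K}

theorem exists_span_singleton_eq (P : PGPoint K v) : ∃ w, P.1 = Submodule.span K {w} := by
  obtain ⟨w, -, hw⟩ := finrank_eq_one_iff'.mp P.2
  refine ⟨w, le_antisymm (fun y hy => ?_) ((Submodule.span_singleton_le_iff_mem _ _).mpr w.2)⟩
  obtain ⟨c, hc⟩ := hw ⟨y, hy⟩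
  exact Submodule.mem_span_singleton.mpr ⟨c, congrArg Subtype.val hc⟩

theorem IsPointFamily.of_injective (hp : Function.Injective p)
    (hpx : ∀ i, (p i).1 = Submodule.span K {x i}) : IsPointFamily K x where
  ne_zero i h := by
    have h1 := (p i).2
    rw [hpx, h, Submodule.span_zero_singleton, finrank_bot] at h1
    exact zero_ne_one h1
  span_injective i j hij := hp (Subtype.ext ((hpx i).trans (hij.trans (hpx j).symm)))

variable [Fintype ι]

theorem ncard_range_inter_ker (hp : Function.Injective p)
    (hpx : ∀ i, (p i).1 = Submodule.span K {x i}) (f : Dual K (Fin v → K)) :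
    (Set.range p ∩ {P | P.1 ≤ LinearMap.ker f}).ncard = #{i | f (x i) = 0} := by
  have hset : Set.range p ∩ {P | P.1 ≤ LinearMap.ker f} =
      p '' (({i | f (x i) = 0} : Finset ι) : Set ι) := by
    rw [← Set.image_univ, ← Set.image_inter_preimage, Set.univ_inter]
    congr 1
    ext i
    simp [hpx, Submodule.span_singleton_le_iff_mem]
  rw [hset, Set.ncard_image_of_injective _ hp, Set.ncard_coe_finset]

theorem isDivisibleSet_range_iff (hp : Function.Injective p)
    (hpx : ∀ i, (p i).1 = Submodule.span K {x i}) :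
    IsDivisibleSet K Δ (Set.range p) ↔ IsDivisibleFamily_s17 K Δ x := by
  rcases isEmpty_or_nonempty ι with _ | ⟨⟨i⟩⟩
  · simp [IsDivisibleSet, IsDivisibleFamily_s17, Set.range_eq_empty, Nat.ModEq.refl]
  have hv : finrank K (Fin v → K) ≠ 0 := by
    have := (p i).2 ▸ Submodule.finrank_le (p i).1
    omega
  have hcard : (Set.range p).ncard = Fintype.card ι := by
    rw [← Set.image_univ, Set.ncard_image_of_injective _ hp, Set.ncard_univ,
      Nat.card_eq_fintype_card]
  have hker (f : Dual K (Fin v → K)) :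
      ((Set.range p).ncard ≡ (Set.range p ∩ {P | P.1 ≤ LinearMap.ker f}).ncard [MOD Δ]) ↔
        Δ ∣ #{i | f (x i) ≠ 0} := by
    have hsplit := card_filter_add_card_filter_not (s := univ) fun i => f (x i) = 0
    rw [hcard, ncard_range_inter_ker hp hpx, Nat.ModEq.comm, ← card_univ,
      Nat.modEq_iff_dvd' (card_filter_le _ _), ← hsplit, Nat.add_sub_cancel_left]
  constructor
  · intro h f
    by_cases hf : f = 0
    · simp [hf]
    · refine (hker f).mp (h _ ?_)
      rw [(exists_ker_eq_iff_finrank hv).mp ⟨f, hf, rfl⟩, finrank_fin_fun]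
  · intro h H hH
    obtain ⟨f, -, rfl⟩ := (exists_ker_eq_iff_finrank hv).mpr (by rwa [finrank_fin_fun])
    exact (hker f).mpr (h f)

variable (K) in
theorem exists_isDivisibleSet_iff [Finite K] {n : ℕ} :
    (∃ (v : ℕ) (S : Set (PGPoint K v)), IsDivisibleSet K Δ S ∧ S.ncard = n) ↔
      HasDivisibleFamily K Δ n := by
  constructor
  · rintro ⟨v, S, hS, rfl⟩
    let e : Fin S.ncard ≃ S := (Finite.equivFin S).symm
    choose w hw using fun P : PGPoint K v => exists_span_singleton_eq P
    have hp : Function.Injective fun i => (e i).1 := Subtype.val_injective.comp e.injective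
    have hrange : Set.range (fun i => (e i).1) = S := by
      rw [← Function.comp_def, e.surjective.range_comp, Subtype.range_coe]
    refine ⟨v, fun i => w (e i), .of_injective hp fun i => hw _, ?_⟩
    exact (isDivisibleSet_range_iff hp fun i => hw _).mp (by rwa [hrange])
  · rintro ⟨v, x, hx, hdiv⟩
    let p (i : Fin n) : PGPoint K v :=
      ⟨Submodule.span K {x i}, finrank_span_singleton (hx.ne_zero i)⟩
    have hp : Function.Injective p := fun i j hij => hx.span_injective (congrArg Subtype.val hij)
    refine ⟨v, Set.range p, (isDivisibleSet_range_iff hp fun i => rfl).mpr hdiv, ?_⟩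
    rw [← Set.image_univ, Set.ncard_image_of_injective _ hp, Set.ncard_univ, Nat.card_fin]

end PointSets

section Counting

theorem card_mul_card_fiber {G H : Type*} [AddGroup G] [AddGroup H] [Fintype G] [Fintype H]
    (φ : G →+ H) (hφ : Function.Surjective φ) (h : H) :
    Fintype.card H * #{g | φ g = h} = Fintype.card G := by
  have hfiber (b : H) : #{g | φ g = b} = #{g | φ g = h} :=
    AddMonoidHom.card_fiber_eq_of_mem_range φ (hφ b) (hφ h)
  have hsum := card_eq_sum_card_fiberwise (f := φ) (s := univ) (t := univ)
    fun _ _ => mem_coe.mpr (mem_univ _)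
  rw [← card_univ (α := G), hsum, sum_congr rfl fun b _ => hfiber b, sum_const, card_univ,
    smul_eq_mul]

variable {K V : Type*} [Field K] [Fintype K] [AddCommGroup V] [Module K V] [Fintype (Dual K V)]

theorem card_dual_apply_eq {κ : Type*} [Fintype κ] {v : κ → V} (hv : LinearIndependent K v)
    (c : κ → K) :
    Fintype.card K ^ Fintype.card κ * #{f : Dual K V | ∀ i, f (v i) = c i} =
      Fintype.card (Dual K V) := by
  let T : Dual K V →ₗ[K] κ → K := LinearMap.pi fun i => Dual.eval K V (v i)
  have hT : Function.Surjective T := by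
    intro b
    obtain ⟨f, hf⟩ := LinearMap.exists_extend ((Basis.span hv).constr K b)
    refine ⟨f, funext fun i => ?_⟩
    have hi := LinearMap.congr_fun hf (Basis.span hv i)
    rwa [Basis.constr_basis, LinearMap.comp_apply, Submodule.subtype_apply, Basis.span_apply] at hi
  have hcoord (f : Dual K V) : (∀ i, f (v i) = c i) ↔ T f = c :=
    (funext_iff (f := T f) (g := c)).symm
  simp only [hcoord, ← Fintype.card_fun]
  convert card_mul_card_fiber T.toAddMonoidHom hT c
  rfl

theorem card_dual_apply_eq_zero {w : V} (hw : w ≠ 0) :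
    Fintype.card K * #{f : Dual K V | f w = 0} = Fintype.card (Dual K V) := by
  simpa using card_dual_apply_eq (K := K) (v := ![w]) ((linearIndependent_unique_iff).mpr hw) 0

theorem card_dual_apply_pair_eq {w₁ w₂ : V} (hw : LinearIndependent K ![w₁, w₂]) (c₁ c₂ : K) :
    Fintype.card K ^ 2 * #{f : Dual K V | f w₁ = c₁ ∧ f w₂ = c₂} = Fintype.card (Dual K V) := by
  simpa [Fin.forall_fin_two] using card_dual_apply_eq hw ![c₁, c₂]

theorem card_dual_apply_triple_eq {w₁ w₂ w₃ : V} (hw : LinearIndependent K ![w₁, w₂])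
    (hw₃ : w₃ ∉ Submodule.span K {w₁, w₂}) (c₁ c₂ c₃ : K) :
    Fintype.card K ^ 3 * #{f : Dual K V | (f w₁ = c₁ ∧ f w₂ = c₂) ∧ f w₃ = c₃} =
      Fintype.card (Dual K V) := by
  have hind : LinearIndependent K ![w₃, w₁, w₂] :=
    linearIndependent_finCons.mpr ⟨hw, by simpa [Set.pair_comm] using hw₃⟩
  simpa [Fin.forall_fin_succ, and_comm, and_left_comm] using card_dual_apply_eq hind ![c₃, c₁, c₂]

end Counting

section Moments

variable {K V ι : Type*} [Field K] [AddCommGroup V] [Module K V] [Fintype ι]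

/-- The number of points of the family `x` in the hyperplane `ker f` (all of them if `f = 0`). -/
def zeroCount (x : ι → V) (f : Dual K V) : ℕ := #{i | f (x i) = 0}

theorem sum_zeroCount_mul (x : ι → V) (s : Finset (Dual K V)) (g : Dual K V → ℕ) :
    ∑ f ∈ s, zeroCount x f * g f = ∑ i, ∑ f ∈ s with f (x i) = 0, g f := by
  simp only [zeroCount, card_filter, sum_mul, ite_mul, one_mul, zero_mul, sum_filter]
  exact sum_comm

theorem sum_zeroCount (x : ι → V) (s : Finset (Dual K V)) :
    ∑ f ∈ s, zeroCount x f = ∑ i, #{f ∈ s | f (x i) = 0} := by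
  simpa using sum_zeroCount_mul x s fun _ => 1

theorem IsDivisibleFamily_s17.zeroCount_modEq {Δ : ℕ} {x : ι → V} (hx : IsDivisibleFamily_s17 K Δ x)
    (f : Dual K V) : zeroCount x f ≡ Fintype.card ι [MOD Δ] := by
  have hsplit := card_filter_add_card_filter_not (s := univ) fun i => f (x i) = 0
  rw [zeroCount, ← card_univ, Nat.modEq_iff_dvd' (card_filter_le _ _), ← hsplit,
    Nat.add_sub_cancel_left]
  exact hx f

namespace IsPointFamily

variable [Fintype K] [Fintype (Dual K V)] {x : ι → V}

theorem card_mul_sum_zeroCount (hx : IsPointFamily K x) :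
    Fintype.card K * ∑ f : Dual K V, zeroCount x f =
      Fintype.card ι * Fintype.card (Dual K V) := by
  rw [sum_zeroCount, mul_sum, sum_congr rfl fun i _ => card_dual_apply_eq_zero (hx.ne_zero i),
    sum_const, card_univ, smul_eq_mul]

theorem card_sq_mul_sum_zeroCount (hx : IsPointFamily K x) (i : ι) :
    Fintype.card K ^ 2 * ∑ f : Dual K V with f (x i) = 0, zeroCount x f =
      (Fintype.card K + (Fintype.card ι - 1)) * Fintype.card (Dual K V) := by
  have hself : Fintype.card K ^ 2 * #{f : Dual K V | f (x i) = 0 ∧ f (x i) = 0} =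
      Fintype.card K * Fintype.card (Dual K V) := by
    rw [← card_dual_apply_eq_zero (hx.ne_zero i), ← mul_assoc, sq]
    simp only [and_self]
  have hother : ∀ j ∈ univ.erase i, Fintype.card K ^ 2 *
      #{f : Dual K V | f (x i) = 0 ∧ f (x j) = 0} = Fintype.card (Dual K V) := fun j hj =>
    card_dual_apply_pair_eq (hx.linearIndependent_pair (ne_of_mem_erase hj).symm) 0 0
  simp only [sum_zeroCount, filter_filter, mul_sum]
  rw [← add_sum_erase _ _ (mem_univ i), hself, sum_congr rfl hother, sum_const,
    card_erase_of_mem (mem_univ i), card_univ, smul_eq_mul, add_mul]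

theorem card_sq_mul_sum_zeroCount_sq (hx : IsPointFamily K x) :
    Fintype.card K ^ 2 * ∑ f : Dual K V, zeroCount x f ^ 2 =
      Fintype.card ι * (Fintype.card K + (Fintype.card ι - 1)) * Fintype.card (Dual K V) := by
  simp only [sq (zeroCount x _)]
  rw [sum_zeroCount_mul, mul_sum, sum_congr rfl fun i _ => hx.card_sq_mul_sum_zeroCount i,
    sum_const,    card_univ, smul_eq_mul, mul_assoc]

theorem card_cube_mul_sum_zeroCount (hx : IsPointFamily K x) {i j : ι} (hij : i ≠ j) :
    Fintype.card K ^ 3 * ∑ f : Dual K V with f (x i) = 0 ∧ f (x j) = 0, zeroCount x f =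
      (Fintype.card ι + (Fintype.card K - 1) * #{k | x k ∈ Submodule.span K {x i, x j}}) *
        Fintype.card (Dual K V) := by
  have hind := hx.linearIndependent_pair hij
  set L := Submodule.span K {x i, x j}
  have hon : ∀ k ∈ ({k | x k ∈ L} : Finset ι), Fintype.card K ^ 3 *
      #{f : Dual K V | (f (x i) = 0 ∧ f (x j) = 0) ∧ f (x k) = 0} =
        Fintype.card K * Fintype.card (Dual K V) := by
    intro k hk
    have hvanish (f : Dual K V) : (f (x i) = 0 ∧ f (x j) = 0) ∧ f (x k) = 0 ↔
        f (x i) = 0 ∧ f (x j) = 0 := by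
      obtain ⟨a, b, hab⟩ := Submodule.mem_span_pair.mp (mem_filter.mp hk).2
      refine and_iff_left_of_imp fun h => ?_
      rw [← hab, map_add, map_smul, map_smul, h.1, h.2, smul_zero, smul_zero, add_zero]
    simp only [hvanish]
    rw [← card_dual_apply_pair_eq hind 0 0]
    ring
  have hoff : ∀ k ∈ ({k | ¬x k ∈ L} : Finset ι), Fintype.card K ^ 3 *
      #{f : Dual K V | (f (x i) = 0 ∧ f (x j) = 0) ∧ f (x k) = 0} = Fintype.card (Dual K V) :=
    fun k hk => card_dual_apply_triple_eq hind (mem_filter.mp hk).2 0 0 0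
  have hcard := card_filter_add_card_filter_not (s := univ) fun k => x k ∈ L
  obtain ⟨r, hr⟩ := Nat.exists_eq_add_of_lt (Fintype.card_pos (α := K))
  simp only [sum_zeroCount, filter_filter, mul_sum]
  rw [← sum_filter_add_sum_filter_not univ fun k => x k ∈ L, sum_congr rfl hon, sum_congr rfl hoff,
    sum_const, sum_const, ← card_univ (α := ι), ← hcard, hr]
  simp only [smul_eq_mul, zero_add, Nat.add_sub_cancel]
  ring

theorem card_cube_mul_sum_zeroCount_cube_le (hx : IsPointFamily K x) {a : ℕ}
    (ha : ∀ i j, i ≠ j → #{k | x k ∈ Submodule.span K {x i, x j}} ≤ a) :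
    Fintype.card K ^ 3 * ∑ f : Dual K V, zeroCount x f ^ 3 ≤
      Fintype.card ι * (Fintype.card K * (Fintype.card K + (Fintype.card ι - 1)) +
        (Fintype.card ι - 1) * (Fintype.card ι + (Fintype.card K - 1) * a)) *
          Fintype.card (Dual K V) := by
  set q := Fintype.card K
  set n := Fintype.card ι
  set N := Fintype.card (Dual K V)
  have hself (i : ι) : q ^ 3 * ∑ f : Dual K V with f (x i) = 0 ∧ f (x i) = 0, zeroCount x f =
      q * (q + (n - 1)) * N := by
    simp only [and_self]
    rw [mul_assoc q, ← hx.card_sq_mul_sum_zeroCount i]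
    ring
  have hother (i : ι) : ∀ j ∈ univ.erase i,
      q ^ 3 * ∑ f : Dual K V with f (x i) = 0 ∧ f (x j) = 0, zeroCount x f ≤
        (n + (q - 1) * a) * N := by
    intro j hj
    have hij := (ne_of_mem_erase hj).symm
    rw [hx.card_cube_mul_sum_zeroCount hij]
    gcongr
    exact ha i j hij
  have hrow (i : ι) : q ^ 3 * ∑ f : Dual K V with f (x i) = 0, zeroCount x f * zeroCount x f ≤
      (q * (q + (n - 1)) + (n - 1) * (n + (q - 1) * a)) * N := by
    simp only [sum_zeroCount_mul, filter_filter]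
    rw [mul_sum, ← add_sum_erase _ _ (mem_univ i), hself, add_mul]
    gcongr
    refine (sum_le_card_nsmul _ _ _ (hother i)).trans_eq ?_
    rw [card_erase_of_mem (mem_univ i), card_univ, smul_eq_mul, mul_assoc]
  simp only [pow_succ' (zeroCount x _) 2, sq (zeroCount x _)]
  rw [sum_zeroCount_mul, mul_sum]
  refine (sum_le_card_nsmul _ _ _ fun i _ => hrow i).trans_eq ?_
  rw [card_univ, smul_eq_mul, mul_assoc]

end IsPointFamily

end Moments

section LowerBounds

variable {K V ι : Type*} [Field K] [Fintype K] [AddCommGroup V] [Module K V]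
  [FiniteDimensional K V] [Fintype ι] {x : ι → V}

theorem card_field_lt_card_of_even [Nonempty ι] (hq : Even (Fintype.card K))
    (hx : IsPointFamily K x) (hdiv : IsDivisibleFamily_s17 K 2 x) :
    Fintype.card K < Fintype.card ι := by
  have : Finite (Dual K V) := Module.finite_of_finite K
  have : Fintype (Dual K V) := Fintype.ofFinite _
  have hN : 0 < Fintype.card (Dual K V) := Fintype.card_pos
  rcases Nat.even_or_odd (Fintype.card ι) with heven | hodd
  · obtain ⟨i⟩ := ‹Nonempty ι›
    have htwo : ∀ f ∈ ({f | f (x i) = 0} : Finset (Dual K V)), 2 ≤ zeroCount x f := by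
      intro f hf
      have hpos : 0 < zeroCount x f := card_pos.mpr ⟨i, by simpa using hf⟩
      have hmod : zeroCount x f % 2 = Fintype.card ι % 2 := hdiv.zeroCount_modEq f
      rw [Nat.even_iff] at heven
      omega
    have hle := Nat.mul_le_mul_left (Fintype.card K ^ 2) (card_nsmul_le_sum _ _ _ htwo)
    rw [hx.card_sq_mul_sum_zeroCount i, smul_eq_mul, sq, ← mul_assoc, mul_assoc (Fintype.card K),
      card_dual_apply_eq_zero (hx.ne_zero i), mul_right_comm] at hle
    have := Nat.le_of_mul_le_mul_right hle hN
    have := Fintype.card_pos (α := K)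
    omega
  · have hone (f : Dual K V) : 1 ≤ zeroCount x f := by
      have hmod : zeroCount x f % 2 = Fintype.card ι % 2 := hdiv.zeroCount_modEq f
      rw [Nat.odd_iff] at hodd
      omega
    have hle := Nat.mul_le_mul_left (Fintype.card K) (card_nsmul_le_sum univ _ 1 fun f _ => hone f)
    rw [hx.card_mul_sum_zeroCount, card_univ, smul_eq_mul, mul_one] at hle
    refine lt_of_le_of_ne (Nat.le_of_mul_le_mul_right hle hN) fun h => ?_
    exact (Nat.not_even_iff_odd.mpr hodd) (h ▸ hq)

-- A functional `f` with `f w₁ = 1` and `f w₂ = 0` vanishes on no point of the line, so by parity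
-- its kernel contains one of the points off the line.
theorem card_field_le_card_notMem_span_pair (hn : Odd (Fintype.card ι)) (hx : IsPointFamily K x)
    (hdiv : IsDivisibleFamily_s17 K 2 x) {w₁ w₂ : V} (hw : LinearIndependent K ![w₁, w₂])
    (hw₂ : ∀ k, w₂ ∉ Submodule.span K {x k}) :
    Fintype.card K ≤ #{k | x k ∉ Submodule.span K {w₁, w₂}} := by
  have : Finite (Dual K V) := Module.finite_of_finite K
  have : Fintype (Dual K V) := Fintype.ofFinite _
  set N := Fintype.card (Dual K V)
  set s : Finset (Dual K V) := {f | f w₁ = 1 ∧ f w₂ = 0} with hs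
  set t : Finset ι := {k | x k ∉ Submodule.span K {w₁, w₂}}
  have hoff : ∀ k ∈ t, Fintype.card K ^ 3 * #{f ∈ s | f (x k) = 0} = N := by
    intro k hk
    rw [hs, filter_filter]
    exact card_dual_apply_triple_eq hw (mem_filter.mp hk).2 1 0 0
  have hon : ∀ k ∈ univ, k ∉ t → #{f ∈ s | f (x k) = 0} = 0 := by
    rintro k - hk
    obtain ⟨a, b, hab⟩ : ∃ a b : K, a • w₁ + b • w₂ = x k := by
      simpa [t, Submodule.mem_span_pair] using hk
    refine card_eq_zero.mpr (filter_eq_empty_iff.mpr fun f hf hfk => ?_)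
    obtain ⟨hf₁, hf₂⟩ := (mem_filter.mp hf).2
    have ha : a = 0 := by simpa [hf₁, hf₂, hfk] using congrArg f hab
    have hb : b ≠ 0 := fun hb => hx.ne_zero k (by simp [← hab, ha, hb])
    refine hw₂ k (Submodule.mem_span_singleton.mpr ⟨b⁻¹, ?_⟩)
    rw [← hab, ha, zero_smul, zero_add, inv_smul_smul₀ hb]
  have hone : ∀ f ∈ s, 1 ≤ zeroCount x f := by
    intro f _
    have hmod : zeroCount x f % 2 = Fintype.card ι % 2 := hdiv.zeroCount_modEq f
    rw [Nat.odd_iff] at hn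
    omega
  have hle := Nat.mul_le_mul_left (Fintype.card K ^ 3) (card_nsmul_le_sum _ _ _ hone)
  rw [sum_zeroCount, ← sum_subset (subset_univ t) hon, mul_sum, sum_congr rfl hoff, sum_const,
    smul_eq_mul, smul_eq_mul, mul_one, pow_succ', mul_assoc, card_dual_apply_pair_eq hw 1 0] at hle
  exact Nat.le_of_mul_le_mul_right hle Fintype.card_pos

end LowerBounds

section CoveredSubspaces

variable {K V ι : Type*} [Field K] [Fintype K] [AddCommGroup V] [Module K V] [Fintype ι]
  {x : ι → V}

theorem IsPointFamily.card_filter_mem_mul (hx : IsPointFamily K x) {W : Submodule K V}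
    (hW : ∀ w ∈ W, w ≠ 0 → ∃ k, w ∈ Submodule.span K {x k}) {p : V → Prop}
    [DecidablePred p] (hp : ∀ (c : Kˣ) w, p (c • w) ↔ p w) :
    #{k | x k ∈ W ∧ p (x k)} * (Fintype.card K - 1) =
      Nat.card {w : V // w ∈ W ∧ w ≠ 0 ∧ p w} := by
  let φ (a : {k // x k ∈ W ∧ p (x k)} × Kˣ) : {w : V // w ∈ W ∧ w ≠ 0 ∧ p w} :=
    ⟨a.2 • x a.1, W.smul_mem _ a.1.2.1, (smul_ne_zero_iff_ne _).mpr (hx.ne_zero _),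
      (hp _ _).mpr a.1.2.2⟩
  have hφ : Function.Bijective φ := by
    constructor
    · rintro ⟨⟨k, hk⟩, c⟩ ⟨⟨l, hl⟩, d⟩ h
      have hval : c • x k = d • x l := congrArg Subtype.val h
      obtain rfl : k = l := by
        by_contra hkl
        refine hx.smul_ne hkl (↑(d⁻¹ * c) : K) ?_
        rw [← Units.smul_def, mul_smul, hval, inv_smul_smul]
      have hcd : (c : K) = d := smul_left_injective K (hx.ne_zero k) hval
      rw [Units.ext hcd]
    · rintro ⟨w, hw, hw0, hpw⟩
      obtain ⟨k, hk⟩ := hW w hw hw0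
      obtain ⟨c, rfl⟩ := Submodule.mem_span_singleton.mp hk
      have hc : c ≠ 0 := fun hc => hw0 (by rw [hc, zero_smul])
      exact ⟨(⟨k, (W.smul_mem_iff hc).mp hw, (hp (Units.mk0 c hc) _).mp hpw⟩, Units.mk0 c hc), rfl⟩
  rw [← Nat.card_congr (Equiv.ofBijective φ hφ), Nat.card_prod, Nat.card_eq_fintype_card,
    Fintype.card_subtype, Nat.card_eq_fintype_card, Fintype.card_units]

theorem even_card_apply_ne_zero [FiniteDimensional K V] (hq : Even (Fintype.card K))
    (hV : 2 ≤ finrank K V) (f : Dual K V) : Even (Nat.card {w // f w ≠ 0}) := by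
  have : Finite V := Module.finite_of_finite K
  have hker : finrank K (LinearMap.ker f) ≠ 0 := by
    have := f.finrank_range_add_finrank_ker
    have := Submodule.finrank_le (LinearMap.range f)
    rw [finrank_self] at this
    omega
  have hsplit : Nat.card V = Nat.card (LinearMap.ker f) + Nat.card {w // f w ≠ 0} := by
    rw [← Nat.card_sum]
    exact Nat.card_congr (Equiv.sumCompl fun w => f w = 0).symm
  have hV' : finrank K V ≠ 0 := by omega
  rw [Module.natCard_eq_pow_finrank (K := K),
    Module.natCard_eq_pow_finrank (K := K) (V := LinearMap.ker f)] at hsplit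
  rw [← Nat.card_eq_fintype_card] at hq
  exact (Nat.even_add.mp (hsplit ▸ hq.pow_of_ne_zero hV')).mp (hq.pow_of_ne_zero hker)

theorem IsDivisibleFamily_s17.restrict_notMem [FiniteDimensional K V] (hq : Even (Fintype.card K))
    (hx : IsPointFamily K x) (hdiv : IsDivisibleFamily_s17 K 2 x) {W : Submodule K V}
    (hWdim : 2 ≤ finrank K W) (hW : ∀ w ∈ W, w ≠ 0 → ∃ k, w ∈ Submodule.span K {x k}) :
    IsDivisibleFamily_s17 K 2 fun k : {k // x k ∉ W} => x k := by
  intro f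
  have hcount := hx.card_filter_mem_mul hW (p := fun w => f w ≠ 0) fun c w => by
    rw [Units.smul_def, map_smul, smul_ne_zero_iff_right c.ne_zero]
  have hnonzero : Nat.card {w : V // w ∈ W ∧ w ≠ 0 ∧ f w ≠ 0} =
      Nat.card {w : W // f.domRestrict W w ≠ 0} := by
    refine Nat.card_congr (Equiv.trans (Equiv.subtypeEquivRight fun w => ?_)
      (Equiv.subtypeSubtypeEquivSubtypeInter (· ∈ W) (f · ≠ 0)).symm)
    exact and_congr_right fun _ => and_iff_right_of_imp fun h h0 => h (by rw [h0, map_zero])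
  have hin : Even #{k | x k ∈ W ∧ f (x k) ≠ 0} := by
    have heven := even_card_apply_ne_zero hq hWdim (f.domRestrict W)
    rw [← hnonzero, ← hcount, Nat.even_mul] at heven
    refine heven.resolve_right fun h => ?_
    have := Fintype.card_pos (α := K)
    grind
  have hout : #{k : {k // x k ∉ W} | f (x k) ≠ 0} = #{k | x k ∉ W ∧ f (x k) ≠ 0} := by
    rw [← Fintype.card_subtype, ← Fintype.card_subtype]
    exact Fintype.card_congr (Equiv.subtypeSubtypeEquivSubtypeInter _ fun k => f (x k) ≠ 0)
  have hsplit := card_filter_add_card_filter_not (s := {k | f (x k) ≠ 0}) fun k => x k ∈ W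
  simp only [filter_filter, and_comm (a := f _ ≠ 0)] at hsplit
  rw [hout, ← even_iff_two_dvd]
  exact (Nat.even_add.mp (hsplit ▸ even_iff_two_dvd.mpr (hdiv f))).mp hin

theorem IsPointFamily.card_mem_span_pair_of_covered (hx : IsPointFamily K x) {w₁ w₂ : V}
    (hw : LinearIndependent K ![w₁, w₂])
    (hcov : ∀ w ∈ Submodule.span K {w₁, w₂}, w ≠ 0 → ∃ k, w ∈ Submodule.span K {x k}) :
    #{k | x k ∈ Submodule.span K {w₁, w₂}} = Fintype.card K + 1 := by
  have hcount := hx.card_filter_mem_mul hcov (p := fun _ => True) fun _ _ => Iff.rfl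
  have hpunctured : {w | w ∈ Submodule.span K {w₁, w₂} ∧ w ≠ 0 ∧ True} =
      (Submodule.span K {w₁, w₂} : Set V) \ {0} := by
    ext w
    simp
  have : FiniteDimensional K (Submodule.span K {w₁, w₂}) :=
    FiniteDimensional.span_of_finite K (Set.toFinite _)
  have hL : Nat.card {w // w ∈ Submodule.span K {w₁, w₂} ∧ w ≠ 0 ∧ True} =
      Fintype.card K ^ 2 - 1 := by
    rw [← Set.coe_ofPred, Nat.card_coe_set_eq, hpunctured,
      Set.ncard_sdiff_singleton_of_mem (zero_mem _), ← Nat.card_coe_set_eq, SetLike.coe_sort_coe,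
      Module.natCard_eq_pow_finrank (K := K), finrank_span_pair hw, Nat.card_eq_fintype_card]
  simp only [and_true] at hcount hL
  have hq : 0 < Fintype.card K - 1 := Nat.sub_pos_of_lt Fintype.one_lt_card
  refine Nat.eq_of_mul_eq_mul_right hq (hcount.trans (hL.trans ?_))
  simpa using Nat.sq_sub_sq (Fintype.card K) 1

end CoveredSubspaces

section Eleven

variable {K V ι : Type*} [Field K] [Fintype K] [AddCommGroup V] [Module K V]
  [FiniteDimensional K V] [Fintype ι] {x : ι → V}

-- A line containing a point outside the family misses at least `q` points of it; the points off a
-- line all of whose points occur form a `2`-divisible family again.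
theorem IsPointFamily.card_mem_span_pair_add_card_le (hq : Even (Fintype.card K))
    (hn : Odd (Fintype.card ι)) (hn₁ : Fintype.card ι ≠ Fintype.card K + 1)
    (hn₂ : Fintype.card ι ≤ 2 * Fintype.card K + 1)
    (hx : IsPointFamily K x) (hdiv : IsDivisibleFamily_s17 K 2 x) {i j : ι} (hij : i ≠ j) :
    #{k | x k ∈ Submodule.span K {x i, x j}} + Fintype.card K ≤ Fintype.card ι := by
  have hind := hx.linearIndependent_pair hij
  set L := Submodule.span K {x i, x j}
  have hsplit := card_filter_add_card_filter_not (s := univ) fun k => x k ∈ L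
  rw [card_univ] at hsplit
  by_cases hcov : ∀ w ∈ L, w ≠ 0 → ∃ k, w ∈ Submodule.span K {x k}
  · have hLcard : #{k | x k ∈ L} = Fintype.card K + 1 :=
      hx.card_mem_span_pair_of_covered hind hcov
    have hdim : 2 ≤ finrank K L := (finrank_span_pair hind).ge
    have hout : Fintype.card {k // x k ∉ L} = #{k | x k ∉ L} := Fintype.card_subtype _
    have : Nonempty {k // x k ∉ L} := Fintype.card_pos_iff.mp (by omega)
    have := card_field_lt_card_of_even hq (hx.comp Subtype.val_injective)
      (hdiv.restrict_notMem hq hx hdim hcov)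
    omega
  · push Not at hcov
    obtain ⟨w, hwL, -, hw⟩ := hcov
    have hwind : LinearIndependent K ![x i, w] :=
      (LinearIndependent.pair_iff' (hx.ne_zero i)).mpr fun c hc =>
        hw i (Submodule.mem_span_singleton.mpr ⟨c, hc⟩)
    have hline : Submodule.span K {x i, w} = L := by
      refine Submodule.eq_of_le_of_finrank_eq (Submodule.span_le.mpr ?_)
        ((finrank_span_pair hwind).trans (finrank_span_pair hind).symm)
      exact Set.pair_subset (Submodule.subset_span (Set.mem_insert _ _)) hwL
    have := card_field_le_card_notMem_span_pair hn hx hdiv hwind hw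
    rw [hline] at this
    omega

-- This is `0 ≤ (z - 1) * (z - 3) * (z - 5)`.
theorem nine_mul_sq_add_fifteen_le {z : ℕ} (hz : Odd z) :
    9 * z ^ 2 + 15 ≤ z ^ 3 + 23 * z := by
  obtain ⟨_ | _ | m, rfl⟩ := hz
  · norm_num
  · norm_num
  · refine Nat.le.intro (k := 8 * (m * (m + 1) * (m + 2))) ?_
    ring

theorem card_ne_eleven (hK : Fintype.card K = 8) (hx : IsPointFamily K x)
    (hdiv : IsDivisibleFamily_s17 K 2 x) : Fintype.card ι ≠ 11 := by
  intro hn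
  have hodd : Odd (Fintype.card ι) := by rw [hn]; decide
  have : Finite (Dual K V) := Module.finite_of_finite K
  have : Fintype (Dual K V) := Fintype.ofFinite _
  have hline : ∀ i j, i ≠ j → #{k | x k ∈ Submodule.span K {x i, x j}} ≤ 3 := by
    intro i j hij
    have := hx.card_mem_span_pair_add_card_le (by rw [hK]; decide) hodd (by omega) (by omega)
      hdiv hij
    omega
  have h₁ := hx.card_mul_sum_zeroCount
  have h₂ := hx.card_sq_mul_sum_zeroCount_sq
  have h₃ := hx.card_cube_mul_sum_zeroCount_cube_le hline
  have hcubic (f : Dual K V) :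
      9 * zeroCount x f ^ 2 + 15 ≤ zeroCount x f ^ 3 + 23 * zeroCount x f := by
    have hmod : zeroCount x f % 2 = Fintype.card ι % 2 := hdiv.zeroCount_modEq f
    exact nine_mul_sq_add_fifteen_le (Nat.odd_iff.mpr (hmod.trans (Nat.odd_iff.mp hodd)))
  have hsum := sum_le_sum fun f (_ : f ∈ (univ : Finset (Dual K V))) => hcubic f
  simp only [sum_add_distrib, ← mul_sum, sum_const, card_univ, smul_eq_mul] at hsum
  have hN := Fintype.card_pos (α := Dual K V)
  rw [hK, hn] at h₁ h₂ h₃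
  omega

end Eleven

section ParitySums

variable {K : Type*} [Field K]

/-- The indicator of `z ≠ 0`, with values in `ZMod 2` so that sums of it count modulo `2`. -/
def nonzeroBit (z : K) : ZMod 2 := if z = 0 then 0 else 1

@[simp]
theorem nonzeroBit_zero : nonzeroBit (0 : K) = 0 := if_pos rfl

theorem nonzeroBit_of_ne_zero {z : K} (hz : z ≠ 0) : nonzeroBit z = 1 := if_neg hz

theorem nonzeroBit_mul {c : K} (hc : c ≠ 0) (z : K) : nonzeroBit (c * z) = nonzeroBit z := by
  simp [nonzeroBit, hc]

theorem sum_nonzeroBit {ι : Type*} (s : Finset ι) (g : ι → K) :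
    ∑ i ∈ s, nonzeroBit (g i) = #{i ∈ s | g i ≠ 0} := by
  simp only [nonzeroBit, card_filter, ne_eq, ite_not, Nat.cast_sum, Nat.cast_ite, Nat.cast_zero,
    Nat.cast_one]

theorem isDivisibleFamily_two_iff {V ι : Type*} [AddCommGroup V] [Module K V] [Fintype ι]
    {x : ι → V} : IsDivisibleFamily_s17 K 2 x ↔ ∀ f : Dual K V, ∑ i, nonzeroBit (f (x i)) = 0 := by
  simp only [IsDivisibleFamily_s17, sum_nonzeroBit, ZMod.natCast_eq_zero_iff]

theorem exists_surjective_addMonoidHom_zmod_two [Finite K] [CharP K 2] :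
    ∃ χ : K →+ ZMod 2, Function.Surjective χ := by
  let _ : Algebra (ZMod 2) K := ZMod.algebra K 2
  exact ⟨(Algebra.trace (ZMod 2) K).toAddMonoidHom, Algebra.trace_surjective (ZMod 2) K⟩

variable [Fintype K]

theorem two_mul_card_fiber {χ : K →+ ZMod 2} (hχ : Function.Surjective χ) (e : ZMod 2) :
    2 * Fintype.card {t // χ t = e} = Fintype.card K := by
  rw [← card_mul_card_fiber χ hχ e, ZMod.card]
  congr 1
  convert Fintype.card_subtype _

variable [CharP K 2]

variable (K) in
theorem even_card_of_charTwo : Even (Fintype.card K) :=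
  even_iff_two_dvd.mpr ((CharP.cast_eq_zero_iff K 2 _).mp (FiniteField.cast_card_eq_zero K))

variable (K) in
theorem sum_univ_nonzeroBit : ∑ t : K, nonzeroBit t = 1 := by
  rw [sum_nonzeroBit, filter_ne' univ (0 : K), card_erase_of_mem (mem_univ _), card_univ,
    Nat.cast_pred Fintype.card_pos, (even_card_of_charTwo K).natCast_zmod_two, zero_sub]
  rfl

theorem sum_nonzeroBit_affine (r s : K) : ∑ t, nonzeroBit (r + s * t) = nonzeroBit s := by
  rcases eq_or_ne s 0 with rfl | hs
  · simp [(even_card_of_charTwo K).natCast_zmod_two]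
  · rw [nonzeroBit_of_ne_zero hs, ← sum_univ_nonzeroBit K]
    exact ((Equiv.mulLeft₀ s hs).trans (Equiv.addLeft r)).sum_comp nonzeroBit

theorem sum_nonzeroBit_quadratic (r s u : K) :
    ∑ t, nonzeroBit (r + s * t + u * t ^ 2) = nonzeroBit s + nonzeroBit u := by
  rcases eq_or_ne u 0 with rfl | hu
  · simp [sum_nonzeroBit_affine]
  rcases eq_or_ne s 0 with rfl | hs
  · have hsq : Function.Bijective fun t : K => t ^ 2 :=
      Finite.injective_iff_bijective.mp CharTwo.sq_injective
    simpa [sum_nonzeroBit_affine] using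
      hsq.sum_comp fun t => nonzeroBit (r + u * t)
  · rw [nonzeroBit_of_ne_zero hs, nonzeroBit_of_ne_zero hu, CharTwo.add_self_eq_zero]
    refine sum_involution (fun t _ => t + s / u) (fun t _ => ?_) (fun t _ _ => ?_)
      (fun _ _ => mem_univ _) (fun t _ => CharTwo.add_cancel_right t (s / u))
    · have hshift : r + s * (t + s / u) + u * (t + s / u) ^ 2 = r + s * t + u * t ^ 2 := by
        linear_combination (2 * t + s / u) * mul_div_cancel₀ s hu +
          (t * s + s * (s / u)) * CharTwo.two_eq_zero (R := K)
      rw [hshift, CharTwo.add_self_eq_zero]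
    · simp [hs, hu]

theorem sum_fiber_nonzeroBit {χ : K →+ ZMod 2} (hχ : Function.Surjective χ)
    (hq : 4 ∣ Fintype.card K) (e : ZMod 2) (s u : K) :
    ∑ t : {t // χ t = e}, nonzeroBit (s + u * t) = χ (s / u) + (e + 1) * nonzeroBit u := by
  have heven : Even (Fintype.card {t // χ t = e}) := by
    have hcard := two_mul_card_fiber hχ e
    grind
  rcases eq_or_ne u 0 with rfl | hu
  · simp [heven.natCast_zmod_two]
  have hbit (t : K) : nonzeroBit (s + u * t) = 1 + if s / u = t then 1 else 0 := by
    rw [← mul_div_cancel₀ s hu, ← mul_add, nonzeroBit_mul hu, mul_div_cancel₀ s hu, nonzeroBit]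
    simp only [CharTwo.add_eq_zero]
    split_ifs <;> rfl
  have hone : ∑ t : {t // χ t = e}, (if s / u = t then 1 else 0) =
      if χ (s / u) = e then (1 : ZMod 2) else 0 := by
    rw [← sum_subtype {t | χ t = e} (by simp) fun t => if s / u = t then (1 : ZMod 2) else 0]
    simp
  have hmod : ∀ d e : ZMod 2, (0 + if d = e then 1 else 0) = d + (e + 1) := by decide
  simp only [hbit, sum_add_distrib, hone, sum_const, card_univ, nsmul_eq_mul, mul_one,
    heven.natCast_zmod_two, nonzeroBit_of_ne_zero hu, hmod]

end ParitySums

section Constructions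

variable {K : Type*} [Field K]

theorem dual_prod_apply (f : Dual K (K × K)) (a b : K) :
    f (a, b) = f (1, 0) * a + f (0, 1) * b := by
  have hab : (a, b) = a • ((1, 0) : K × K) + b • ((0, 1) : K × K) := by simp
  rw [hab, map_add, map_smul, map_smul, smul_eq_mul, smul_eq_mul, mul_comm a, mul_comm b]

theorem HasDivisibleFamily.of_affine_plane {ι κ : Type*} [Fintype ι] [Fintype κ]
    {a : ι → K × K} {y : κ → K × K} {n : ℕ} (ha : Function.Injective a) (hy : IsPointFamily K y)
    (hsum : ∀ r s u : K, ∑ i, nonzeroBit (r + s * (a i).1 + u * (a i).2) +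
      ∑ k, nonzeroBit (s * (y k).1 + u * (y k).2) = 0)
    (hn : Fintype.card ι + Fintype.card κ = n) : HasDivisibleFamily K 2 n := by
  let x : ι → K × K × K := fun i => (1, a i)
  let z : κ → K × K × K := LinearMap.inr K K (K × K) ∘ y
  have hx : IsPointFamily K x :=
    .of_apply_eq_one (fun i j h => ha (Prod.ext_iff.mp h).2) (LinearMap.fst K K (K × K))
      fun _ => rfl
  have hz : IsPointFamily K z := hy.map LinearMap.inr_injective
  refine .of_family (hx.sumElim hz (LinearMap.fst K K (K × K)) (fun _ => one_ne_zero) fun _ => rfl)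
    (isDivisibleFamily_two_iff.mpr fun f => ?_) (by rw [Fintype.card_sum, hn])
  let g : Dual K (K × K) := f ∘ₗ LinearMap.inr K K (K × K)
  have hfx (i : ι) : f (x i) = f (1, 0) + g (1, 0) * (a i).1 + g (0, 1) * (a i).2 := by
    rw [add_assoc, ← dual_prod_apply g, LinearMap.comp_apply, ← map_add]
    simp [x]
  have hfz (k : κ) : f (z k) = g (1, 0) * (y k).1 + g (0, 1) * (y k).2 := dual_prod_apply g _ _
  simpa only [Fintype.sum_sum_type, Sum.elim_inl, Sum.elim_inr, hfx, hfz] using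
    hsum (f (1, 0)) (g (1, 0)) (g (0, 1))

variable [Fintype K]

theorem sum_subtype_ne_zero_eq (f : K → ZMod 2) : ∑ t : {t : K // t ≠ 0}, f t = f 0 + ∑ t, f t := by
  rw [Fintype.sum_eq_add_sum_subtype_ne f 0, ← add_assoc, CharTwo.add_self_eq_zero, zero_add]

variable [CharP K 2]

-- The point `x 0` is replaced by the other `q` points on the line joining it to a new point.
theorem HasDivisibleFamily.add_card {n : ℕ} (h : HasDivisibleFamily K 2 (n + 1)) :
    HasDivisibleFamily K 2 (n + Fintype.card K) := by
  obtain ⟨v, x, hx, hdiv⟩ := h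
  let cone : K → (Fin v → K) × K := fun t => (t • x 0, 1)
  let rest : {i : Fin (n + 1) // i ≠ 0} → (Fin v → K) × K :=
    LinearMap.inl K (Fin v → K) K ∘ x ∘ Subtype.val
  have hcone : IsPointFamily K cone :=
    .of_apply_eq_one (fun s t hst => smul_left_injective K (hx.ne_zero 0) (Prod.ext_iff.mp hst).1)
      (LinearMap.snd K (Fin v → K) K) fun _ => rfl
  have hrest : IsPointFamily K rest :=
    (hx.comp Subtype.val_injective).map LinearMap.inl_injective
  refine .of_family (hcone.sumElim hrest (LinearMap.snd K (Fin v → K) K) (fun _ => one_ne_zero)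
    fun _ => rfl) (isDivisibleFamily_two_iff.mpr fun f => ?_) (by simp [add_comm])
  have hfcone (t : K) : f (cone t) = f (0, 1) + f (x 0, 0) * t := by
    rw [mul_comm, ← smul_eq_mul, ← map_smul, ← map_add]
    simp [cone]
  have hfx := isDivisibleFamily_two_iff.mp (hdiv.map (LinearMap.inl K (Fin v → K) K)) f
  rw [Fintype.sum_eq_add_sum_subtype_ne _ 0] at hfx
  simp only [Fintype.sum_sum_type, Sum.elim_inl, Sum.elim_inr, hfcone, sum_nonzeroBit_affine]
  exact hfx

variable (K)

theorem hasDivisibleFamily_line : HasDivisibleFamily K 2 (Fintype.card K + 1) := by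
  refine .of_affine_plane (a := fun t : K => (t, 0)) (y := fun _ : Unit => (1, 0))
    (fun s t h => (Prod.ext_iff.mp h).1) (.of_subsingleton (by simp)) (fun r s u => ?_) (by simp)
  simp [sum_nonzeroBit_affine, CharTwo.add_self_eq_zero]

theorem hasDivisibleFamily_hyperoval : HasDivisibleFamily K 2 (Fintype.card K + 2) := by
  have hy : IsPointFamily K (Sum.elim (fun _ : Unit => ((1, 0) : K × K)) fun _ : Unit => (0, 1)) :=
    .sumElim (.of_subsingleton (by simp)) (.of_subsingleton (by simp)) (LinearMap.fst K K K)
      (by simp) (by simp)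
  refine .of_affine_plane (a := fun t : K => (t, t ^ 2)) (fun s t h => (Prod.ext_iff.mp h).1) hy
    (fun r s u => ?_) (by simp)
  simp [sum_nonzeroBit_quadratic, CharTwo.add_self_eq_zero]

theorem hasDivisibleFamily_two_mul_sub_one :
    HasDivisibleFamily K 2 (2 * Fintype.card K - 1) := by
  have hy : IsPointFamily K fun t : {t : K // t ≠ 0} => ((1, t) : K × K) :=
    .of_apply_eq_one (fun s t h => Subtype.ext (Prod.ext_iff.mp h).2) (LinearMap.fst K K K)
      fun _ => rfl
  refine .of_affine_plane (a := fun t : K => (t, t ^ 2)) (fun s t h => (Prod.ext_iff.mp h).1) hy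
    (fun r s u => ?_) ?_
  · have hinf := sum_subtype_ne_zero_eq fun t : K => nonzeroBit (s * 1 + u * t)
    rw [sum_nonzeroBit_quadratic, hinf, sum_nonzeroBit_affine, mul_one, mul_zero, add_zero,
      CharTwo.add_self_eq_zero]
  · have := Fintype.card_pos (α := K)
    simp
    omega

variable {K}

theorem hasDivisibleFamily_mul_card_sub_one {m : ℕ} (hm : Even m) (hmq : m < Fintype.card K) :
    HasDivisibleFamily K 2 (m * (Fintype.card K - 1)) := by
  obtain ⟨T, hT, rfl⟩ : ∃ T ⊆ univ.erase (0 : K), #T = m :=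
    exists_subset_card_eq (by rw [card_erase_of_mem (mem_univ _), card_univ]; omega)
  have hT0 (c : T) : (c : K) ≠ 0 := ne_of_mem_erase (hT c.2)
  let a : T × {t : K // t ≠ 0} → K × K := fun p => (p.2, p.1 * p.2 ^ 2)
  have ha : Function.Injective a := by
    rintro ⟨c, t⟩ ⟨d, t'⟩ h
    obtain rfl : t = t' := Subtype.ext (Prod.ext_iff.mp h).1
    have hc : (c : K) = d := mul_right_cancel₀ (pow_ne_zero 2 t.2) (Prod.ext_iff.mp h).2
    rw [Subtype.ext hc]
  refine .of_affine_plane ha (y := Empty.elim) (.of_subsingleton (by simp)) (fun r s u => ?_)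
    (by simp)
  have hparabola (c : T) : ∑ t : {t : K // t ≠ 0}, nonzeroBit (r + s * t + u * (c * t ^ 2)) =
      nonzeroBit r + (nonzeroBit s + nonzeroBit u) := by
    have hsum := sum_subtype_ne_zero_eq fun t : K => nonzeroBit (r + s * t + c * u * t ^ 2)
    rw [sum_nonzeroBit_quadratic, nonzeroBit_mul (hT0 c)] at hsum
    simpa [mul_left_comm, mul_assoc] using hsum
  simp only [a, Fintype.sum_prod_type, hparabola, sum_const, card_univ, Fintype.card_coe,
    nsmul_eq_mul, hm.natCast_zmod_two, zero_mul, Fintype.sum_empty, add_zero]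

theorem sum_nonzeroBit_graph {χ : K →+ ZMod 2} (hχ : Function.Surjective χ)
    (hq : 4 ∣ Fintype.card K) (r s u : K) :
    ∑ t, nonzeroBit (r + s * ZMod.castHom (dvd_refl 2) K (χ t) + u * t) =
      χ (s / u) + nonzeroBit u := by
  have hfiber (e : ZMod 2) : ∑ t : {t // χ t = e},
      nonzeroBit (r + s * ZMod.castHom (dvd_refl 2) K (χ t) + u * t) =
        χ ((r + s * ZMod.castHom (dvd_refl 2) K e) / u) + (e + 1) * nonzeroBit u := by
    rw [← sum_fiber_nonzeroBit hχ hq]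
    exact sum_congr rfl fun t _ => by rw [t.2]
  rw [← Fintype.sum_fiberwise χ]
  simp only [hfiber]
  have huniv : (univ : Finset (ZMod 2)) = {0, 1} := rfl
  rw [huniv, sum_pair zero_ne_one]
  simp only [map_zero, map_one, mul_zero, mul_one, add_zero, zero_add, one_mul, add_div, map_add]
  linear_combination (χ (r / u) + nonzeroBit u) * CharTwo.two_eq_zero (R := ZMod 2)

theorem hasDivisibleFamily_card_add_half (hq : 4 ∣ Fintype.card K) :
    HasDivisibleFamily K 2 (Fintype.card K + Fintype.card K / 2) := by
  obtain ⟨χ, hχ⟩ := exists_surjective_addMonoidHom_zmod_two (K := K)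
  have hy : IsPointFamily K fun t : {t // χ t = 0} => ((1, t) : K × K) :=
    .of_apply_eq_one (fun s t h => Subtype.ext (Prod.ext_iff.mp h).2) (LinearMap.fst K K K)
      fun _ => rfl
  refine .of_affine_plane (a := fun t => (ZMod.castHom (dvd_refl 2) K (χ t), t))
    (fun s t h => (Prod.ext_iff.mp h).2) hy (fun r s u => ?_) ?_
  · have hinf := sum_fiber_nonzeroBit hχ hq 0 s u
    rw [sum_nonzeroBit_graph hχ hq]
    simp only [mul_one]
    linear_combination hinf +
      (χ (s / u) + nonzeroBit u) * CharTwo.two_eq_zero (R := ZMod 2)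
  · have := two_mul_card_fiber hχ 0
    omega

theorem hasDivisibleFamily_card_add_half_add_one (hq : 4 ∣ Fintype.card K) :
    HasDivisibleFamily K 2 (Fintype.card K + Fintype.card K / 2 + 1) := by
  obtain ⟨χ, hχ⟩ := exists_surjective_addMonoidHom_zmod_two (K := K)
  have hy : IsPointFamily K (Sum.elim (fun t : {t // χ t = 1} => ((1, t) : K × K))
      fun _ : Unit => (0, 1)) :=
    .sumElim (.of_apply_eq_one (fun s t h => Subtype.ext (Prod.ext_iff.mp h).2)
      (LinearMap.fst K K K) fun _ => rfl) (.of_subsingleton (by simp)) (LinearMap.fst K K K)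
      (by simp) (by simp)
  refine .of_affine_plane (a := fun t => (ZMod.castHom (dvd_refl 2) K (χ t), t))
    (fun s t h => (Prod.ext_iff.mp h).2) hy (fun r s u => ?_) ?_
  · have hinf := sum_fiber_nonzeroBit hχ hq 1 s u
    rw [sum_nonzeroBit_graph hχ hq]
    simp only [Fintype.sum_sum_type, Sum.elim_inl, Sum.elim_inr, univ_unique, sum_singleton,
      mul_zero, mul_one, zero_add]
    linear_combination hinf +
      (χ (s / u) + 2 * nonzeroBit u) * CharTwo.two_eq_zero (R := ZMod 2)
  · have := two_mul_card_fiber hχ 1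
    simp
    omega

end Constructions

section OrderEight

variable {K : Type*} [Field K] [Fintype K]

theorem charP_two_of_card_eq_eight (hK : Fintype.card K = 8) : CharP K 2 := by
  have h8 : (2 : K) ^ 3 = 0 := by
    rw [← FiniteField.cast_card_eq_zero K, hK]
    norm_num
  exact CharTwo.of_one_ne_zero_of_two_eq_zero one_ne_zero (pow_eq_zero_iff three_ne_zero |>.mp h8)

theorem hasDivisibleFamily_two_of_card_eq_eight (hK : Fintype.card K = 8) {n : ℕ}
    (hn : n = 9 ∨ n = 10 ∨ 12 ≤ n) : HasDivisibleFamily K 2 n := by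
  have := charP_two_of_card_eq_eight hK
  have h9 : HasDivisibleFamily K 2 9 := by simpa [hK] using hasDivisibleFamily_line K
  induction n using Nat.strong_induction_on with
  | _ n ih =>
    rcases (by omega : n = 9 ∨ n = 10 ∨ n = 12 ∨ n = 13 ∨ n = 14 ∨ n = 15 ∨ n = 18 ∨
      (16 ≤ n ∧ n ≠ 18)) with rfl | rfl | rfl | rfl | rfl | rfl | rfl | hn'
    · exact h9
    · simpa [hK] using hasDivisibleFamily_hyperoval K
    · simpa [hK] using hasDivisibleFamily_card_add_half (K := K) (by rw [hK]; decide)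
    · simpa [hK] using hasDivisibleFamily_card_add_half_add_one (K := K) (by rw [hK]; decide)
    · simpa [hK] using hasDivisibleFamily_mul_card_sub_one (K := K) even_two (by omega)
    · simpa [hK] using hasDivisibleFamily_two_mul_sub_one K
    · exact h9.add h9
    · have hprev := ih (n - 7) (by omega) (by omega)
      rw [show n - 7 = n - 8 + 1 by omega] at hprev
      simpa [hK, show n - 8 + 8 = n by omega] using hprev.add_card

end OrderEight

/-- For `n ≥ 1`, a dimension `v` and a nonempty `2`-divisible set of points
`S` in `PG(v-1,8)` with `|S| = n` exist iff `n ∈ {9,10}` or `n ≥ 12`. -/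
theorem stmt_17 (hF : Fintype.card F = 8) (n : ℕ) (hn : 1 ≤ n) :
    (∃ (v : ℕ) (S : Set (PGPoint F v)),
        S.Nonempty ∧ IsDivisibleSet F 2 S ∧ S.ncard = n) ↔
      (n = 9 ∨ n = 10 ∨ 12 ≤ n) := by
  constructor
  · rintro ⟨v, S, -, hS, hcard⟩
    obtain ⟨w, x, hx, hdiv⟩ := (exists_isDivisibleSet_iff F).mp ⟨v, S, hS, hcard⟩
    have : Nonempty (Fin n) := ⟨⟨0, hn⟩⟩
    have hlt := card_field_lt_card_of_even (hF ▸ by decide) hx hdiv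
    have hne := card_ne_eleven hF hx hdiv
    rw [Fintype.card_fin] at hlt hne
    omega
  · intro h
    obtain ⟨v, S, hS, rfl⟩ :=
      (exists_isDivisibleSet_iff F).mpr (hasDivisibleFamily_two_of_card_eq_eight hF h)
    exact ⟨v, S, Set.nonempty_of_ncard_ne_zero (by omega), hS, rfl⟩

end
end
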